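/- arXiv:2412.07054 — 2 statements merged into one kernel-verified Lean document; each statement's English description precedes it below -/
import Mathlib

section
/- Let r and s be rational numbers with 0 < r < 1, 1/2 < s and r < s. Then F(r,s) = 2^{4−8r} · (Γ(r)·Γ(s−r)²)/(Γ(1−r)·Γ(s−1/2)²) · F(1−r, 1/2−r+s). (This is Kummer's transformation rewritten in the normalization F; note that r and 1−r have the same denominator, so N(r) = N(1−r).) -/
/-- The Pochhammer symbol (x)_k = x(x+1)⋯(x+k−1). -/
noncomputable def poch (x : ℝ) (k : ℕ) : ℝ := ∏ i ∈ Finset.range k, (x + i)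

/-- The hypergeometric series ₃F₂(a1,a2,a3;b1,b2;1). -/
noncomputable def threeF2 (a1 a2 a3 b1 b2 : ℝ) : ℝ :=
  ∑' k : ℕ, poch a1 k * poch a2 k * poch a3 k /
    (poch b1 k * poch b2 k * (Nat.factorial k : ℝ))

/-- The Beta function B(a,b) = Γ(a)Γ(b)/Γ(a+b). -/
noncomputable def betaFn (a b : ℝ) : ℝ :=
  Real.Gamma a * Real.Gamma b / Real.Gamma (a + b)

/-- The normalized hypergeometric value
F(r,s) = (2^{1−4r}·B(r,s−r)/N(r)) · ₃F₂(1/2,1/2,r;1,s;1), where N(r) = 2·den(r). -/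
noncomputable def Fval (r s : ℚ) : ℝ :=
  (2:ℝ) ^ ((1:ℝ) - 4 * (r:ℝ)) * betaFn (r:ℝ) ((s:ℝ) - (r:ℝ)) / (2 * (r.den : ℝ)) *
    threeF2 (1/2) (1/2) (r:ℝ) 1 (s:ℝ)

/-!
Multiplying `₃F₂(a, b, c; d, e; 1)` by `B(a, e - a)` turns it into Euler's integral of
`x ^ (a - 1) * (1 - x) ^ (e - a - 1) * ₂F₁(b, c; d; x)` over `(0, 1)`. Euler's transformation
`₂F₁(b, c; d; x) = (1 - x) ^ (d - b - c) * ₂F₁(d - b, d - c; d; x)` only changes the exponent of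
`1 - x`, so the same integral also represents a multiple of
`₃F₂(a, d - b, d - c; d, d + e - b - c; 1)`. This is Kummer's transformation; the values
`a = b = 1/2`, `c = r`, `d = 1`, `e = s` give its normalized form.

The factor `(1 - x) ^ (d - b - c)` is the binomial series `₂F₁(b + c - d, 1; 1; x)`, so Euler's
transformation is an identity between coefficients of power series, which holds because both sides
satisfy the same first-order recurrence.
-/

open MeasureTheory Set Finset.HasAntidiagonal

section Coefficient

variable {𝕂 : Type*} [Field 𝕂] [CharZero 𝕂] (a b : 𝕂) {c : 𝕂}

lemma ordinaryHypergeometricCoefficient_succ {n : ℕ} (hc : c + n ≠ 0) :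
    (n + 1) * (c + n) * ordinaryHypergeometricCoefficient a b c (n + 1) =
      (a + n) * (b + n) * ordinaryHypergeometricCoefficient a b c n := by
  simp only [ordinaryHypergeometricCoefficient, ascPochhammer_succ_eval, Nat.factorial_succ]
  push_cast
  field_simp

lemma ordinaryHypergeometricCoefficient_one_one_succ (n : ℕ) :
    (n + 1) * ordinaryHypergeometricCoefficient a 1 1 (n + 1) =
      (a + n) * ordinaryHypergeometricCoefficient a 1 1 n := by
  have hn : (1 : 𝕂) + n ≠ 0 := by rw [add_comm]; exact n.cast_add_one_ne_zero
  refine mul_left_cancel₀ hn ?_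
  linear_combination ordinaryHypergeometricCoefficient_succ a 1 hn

lemma sum_antidiagonal_ordinaryHypergeometricCoefficient (hc : ∀ k : ℕ, c ≠ -k) (n : ℕ) :
    ∑ p ∈ antidiagonal n, ordinaryHypergeometricCoefficient (a + b - c) 1 1 p.1 *
      ordinaryHypergeometricCoefficient (c - a) (c - b) c p.2 =
      ordinaryHypergeometricCoefficient a b c n := by
  have hcn (j : ℕ) : c + j ≠ 0 := eq_neg_iff_add_eq_zero.not.mp (hc j)
  induction n with
  | zero => simp
  | succ n ih =>
    set β := ordinaryHypergeometricCoefficient (a + b - c) 1 1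
    set α := ordinaryHypergeometricCoefficient (c - a) (c - b) c
    have hα (j : ℕ) : (j + 1) * (c + j) * α (j + 1) = (c - a + j) * (c - b + j) * α j :=
      ordinaryHypergeometricCoefficient_succ _ _ (hcn j)
    have hβ (i : ℕ) : (i + 1) * β (i + 1) = (a + b - c + i) * β i :=
      ordinaryHypergeometricCoefficient_one_one_succ _ i
    refine mul_left_cancel₀ (mul_ne_zero n.cast_add_one_ne_zero (hcn n)) ?_
    rw [ordinaryHypergeometricCoefficient_succ a b (hcn n), ← ih]
    -- For `i + j = n + 1`, `(i + j) * (c + n) = i * (c + 2 * j + i - 1) + j * (c + j - 1)`, where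
    -- the factors `i` and `j` let the recurrences lower the index of `β` and `α` by one.
    calc (n + 1) * (c + n) * ∑ p ∈ antidiagonal (n + 1), β p.1 * α p.2
        = ∑ p ∈ antidiagonal (n + 1), p.1 * (c + 2 * p.2 + p.1 - 1) * β p.1 * α p.2 +
          ∑ p ∈ antidiagonal (n + 1), p.2 * (c + p.2 - 1) * β p.1 * α p.2 := by
          rw [Finset.mul_sum, ← Finset.sum_add_distrib]
          refine Finset.sum_congr rfl fun p hp => ?_
          have h : (p.1 : 𝕂) + p.2 = n + 1 := by exact_mod_cast mem_antidiagonal.mp hp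
          rw [eq_sub_of_add_eq h.symm]
          ring
      _ = ∑ p ∈ antidiagonal n, (a + b - c + p.1) * (c + 2 * p.2 + p.1) * β p.1 * α p.2 +
          ∑ p ∈ antidiagonal n, (c - a + p.2) * (c - b + p.2) * β p.1 * α p.2 := by
          rw [Finset.Nat.sum_antidiagonal_succ, Finset.Nat.sum_antidiagonal_succ']
          simp only [Nat.cast_zero, zero_mul, zero_add, add_zero, Nat.cast_succ]
          congr 1 <;> refine Finset.sum_congr rfl fun p _ => ?_
          · linear_combination (c + 2 * p.2 + p.1) * α p.2 * hβ p.1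
          · linear_combination β p.1 * hα p.2
      _ = (a + n) * (b + n) * ∑ p ∈ antidiagonal n, β p.1 * α p.2 := by
          rw [Finset.mul_sum, ← Finset.sum_add_distrib]
          refine Finset.sum_congr rfl fun p hp => ?_
          rw [← mem_antidiagonal.mp hp]
          push_cast
          ring

end Coefficient

section RCLike

variable {𝕂 : Type*} [RCLike 𝕂]

lemma one_le_radius_ordinaryHypergeometricSeries (𝔸 : Type*) [NormedDivisionRing 𝔸]
    [NormedAlgebra 𝕂 𝔸] (a b c : 𝕂) : 1 ≤ (ordinaryHypergeometricSeries 𝔸 a b c).radius := by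
  by_cases h : ∀ k : ℕ, ↑k ≠ -a ∧ ↑k ≠ -b ∧ ↑k ≠ -c
  · exact (ordinaryHypergeometricSeries_radius_eq_one 𝔸 a b c h).ge
  · simp only [not_forall, not_and_or, not_not, ← neg_eq_iff_eq_neg] at h
    obtain ⟨k, rfl | rfl | rfl⟩ := h
    · simp [ordinaryHypergeometric_radius_top_of_neg_nat₁]
    · simp [ordinaryHypergeometric_radius_top_of_neg_nat₂]
    · simp [ordinaryHypergeometric_radius_top_of_neg_nat₃]

variable (a b c : 𝕂) {x : 𝕂}

lemma summable_norm_ordinaryHypergeometricCoefficient_mul_pow (hx : ‖x‖ < 1) :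
    Summable fun n => ‖ordinaryHypergeometricCoefficient a b c n * x ^ n‖ := by
  have hx' : x ∈ Metric.eball 0 (ordinaryHypergeometricSeries 𝕂 a b c).radius :=
    Metric.eball_subset_eball (one_le_radius_ordinaryHypergeometricSeries 𝕂 a b c) (by
      simpa [enorm_eq_nnnorm, ← NNReal.coe_lt_coe] using hx)
  refine ((ordinaryHypergeometricSeries 𝕂 a b c).summable_norm_apply hx').congr fun n => ?_
  rw [ordinaryHypergeometricSeries_apply_eq, smul_eq_mul]

lemma ordinaryHypergeometric_eq_mul (hc : ∀ k : ℕ, c ≠ -k) (hx : ‖x‖ < 1) :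
    ₂F₁ a b c x = ₂F₁ (a + b - c) 1 1 x * ₂F₁ (c - a) (c - b) c x := by
  have hbinom := summable_norm_ordinaryHypergeometricCoefficient_mul_pow (a + b - c) 1 1 hx
  have hgauss := summable_norm_ordinaryHypergeometricCoefficient_mul_pow (c - a) (c - b) c hx
  simp only [ordinaryHypergeometric_eq_tsum, smul_eq_mul]
  rw [tsum_mul_tsum_eq_tsum_sum_antidiagonal_of_summable_norm hbinom hgauss]
  refine tsum_congr fun n => ?_
  rw [← ordinaryHypergeometricCoefficient,
    ← sum_antidiagonal_ordinaryHypergeometricCoefficient a b hc, Finset.sum_mul]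
  refine Finset.sum_congr rfl fun p hp => ?_
  rw [← mem_antidiagonal.mp hp, pow_add]
  ring

end RCLike

lemma ordinaryHypergeometric_one_one (u : ℝ) {x : ℝ} (hx : ‖x‖ < 1) :
    ₂F₁ u 1 1 x = (1 - x) ^ (-u) := by
  have hx' : -x ∈ Metric.eball 0 1 := by
    simpa [enorm_eq_nnnorm, ← NNReal.coe_lt_coe] using hx
  have hbinom := Real.one_add_rpow_hasFPowerSeriesOnBall_zero (a := -u)
  have hneg_one (k : ℕ) : (k : ℝ) ≠ -1 := (neg_one_lt_zero.trans_le k.cast_nonneg).ne'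
  rw [binomialSeries_eq_ordinaryHypergeometricSeries hneg_one, neg_neg] at hbinom
  rw [sub_eq_add_neg, ← zero_add (-x), hbinom.sum hx']
  refine tsum_congr fun n => ?_
  rw [FormalMultilinearSeries.compContinuousLinearMap_apply]
  simp [Function.comp_def]

theorem ordinaryHypergeometric_eq_rpow_mul (a b : ℝ) {c x : ℝ} (hc : ∀ k : ℕ, c ≠ -k)
    (hx : ‖x‖ < 1) : ₂F₁ a b c x = (1 - x) ^ (c - a - b) * ₂F₁ (c - a) (c - b) c x := by
  rw [ordinaryHypergeometric_eq_mul a b c hc hx, ordinaryHypergeometric_one_one _ hx]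
  ring_nf

lemma integral_tsum_of_nonneg {α ι : Type*} [MeasurableSpace α] [Countable ι] {μ : Measure α}
    {f : ι → α → ℝ} (hf : ∀ i, Integrable (f i) μ) (hf_nonneg : ∀ᵐ x ∂μ, ∀ i, 0 ≤ f i x)
    (hf_sum : ∀ᵐ x ∂μ, Summable fun i => f i x) :
    ∫ x, ∑' i, f i x ∂μ = ∑' i, ∫ x, f i x ∂μ := by
  have hmeas (i : ι) : AEMeasurable (fun x => ENNReal.ofReal (f i x)) μ :=
    (hf i).aemeasurable.ennreal_ofReal
  have hnonneg (i : ι) : 0 ≤ᵐ[μ] f i := hf_nonneg.mono fun x hx => hx i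
  have htsum : ∀ᵐ x ∂μ, ENNReal.ofReal (∑' i, f i x) = ∑' i, ENNReal.ofReal (f i x) := by
    filter_upwards [hf_nonneg, hf_sum] with x using ENNReal.ofReal_tsum_of_nonneg
  calc ∫ x, ∑' i, f i x ∂μ
      = ∫ x, (∑' i, ENNReal.ofReal (f i x)).toReal ∂μ := by
        refine integral_congr_ae ?_
        filter_upwards [htsum, hf_nonneg] with x hx hx_nonneg
        rw [← hx, ENNReal.toReal_ofReal (tsum_nonneg hx_nonneg)]
    _ = (∑' i, ∫⁻ x, ENNReal.ofReal (f i x) ∂μ).toReal := by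
        rw [integral_toReal (.tsum hmeas), lintegral_tsum hmeas]
        filter_upwards [htsum] with x hx using hx ▸ ENNReal.ofReal_lt_top
    _ = ∑' i, ∫ x, f i x ∂μ := by
        simp_rw [← ofReal_integral_eq_lintegral_ofReal (hf _) (hnonneg _)]
        rw [ENNReal.tsum_toReal_eq fun _ => ENNReal.ofReal_ne_top]
        exact tsum_congr fun i => ENNReal.toReal_ofReal (integral_nonneg_of_ae (hnonneg i))

lemma poch_eq_eval_ascPochhammer (x : ℝ) (k : ℕ) : poch x k = (ascPochhammer ℝ k).eval x := by
  induction k with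
  | zero => simp [poch]
  | succ k ih => rw [ascPochhammer_succ_eval, ← ih, poch, Finset.prod_range_succ, poch]

lemma ascPochhammer_nonneg {R : Type*} [Semiring R] [PartialOrder R] [IsOrderedRing R]
    {x : R} (hx : 0 ≤ x) (k : ℕ) : 0 ≤ (ascPochhammer R k).eval x := by
  induction k with
  | zero => simp
  | succ k ih => rw [ascPochhammer_succ_eval]; positivity

lemma ordinaryHypergeometricCoefficient_nonneg {R : Type*} [Field R] [LinearOrder R]
    [IsStrictOrderedRing R] {a b c : R} (ha : 0 ≤ a) (hb : 0 ≤ b) (hc : 0 ≤ c) (k : ℕ) :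
    0 ≤ ordinaryHypergeometricCoefficient a b c k := by
  have := ascPochhammer_nonneg ha k
  have := ascPochhammer_nonneg hb k
  have := ascPochhammer_nonneg hc k
  positivity

lemma Gamma_add_natCast {x : ℝ} (hx : ∀ k : ℕ, x ≠ -k) (n : ℕ) :
    Real.Gamma (x + n) = (ascPochhammer ℝ n).eval x * Real.Gamma x := by
  induction n with
  | zero => simp
  | succ n ih =>
    rw [Nat.cast_succ, ← add_assoc, Real.Gamma_add_one (eq_neg_iff_add_eq_zero.not.mp (hx n)), ih,
      ascPochhammer_succ_eval]
    ring

lemma betaFn_pos {p q : ℝ} (hp : 0 < p) (hq : 0 < q) : 0 < betaFn p q :=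
  ProbabilityTheory.beta_pos hp hq

lemma integral_rpow_mul_one_sub_rpow {p q : ℝ} (hp : 0 < p) (hq : 0 < q) :
    ∫ x in Ioo (0 : ℝ) 1, x ^ (p - 1) * (1 - x) ^ (q - 1) = betaFn p q := by
  have hcast : Complex.betaIntegral p q =
      ((∫ x in Ioo (0 : ℝ) 1, x ^ (p - 1) * (1 - x) ^ (q - 1) : ℝ) : ℂ) := by
    rw [Complex.betaIntegral, intervalIntegral.integral_of_le zero_le_one,
      integral_Ioc_eq_integral_Ioo, ← integral_complex_ofReal]
    refine setIntegral_congr_fun measurableSet_Ioo fun x hx => ?_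
    simp [Complex.ofReal_cpow hx.1.le, Complex.ofReal_cpow (sub_nonneg.mpr hx.2.le)]
  calc _ = (Complex.betaIntegral p q).re := by rw [hcast, Complex.ofReal_re]
    _ = betaFn p q := (ProbabilityTheory.beta_eq_betaIntegralReal p q hp hq).symm

lemma integral_rpow_mul_one_sub_rpow_mul_pow {p q : ℝ} (hp : 0 < p) (hq : 0 < q) (k : ℕ) :
    ∫ x in Ioo (0 : ℝ) 1, x ^ (p - 1) * (1 - x) ^ (q - 1) * x ^ k = betaFn (p + k) q := by
  rw [← integral_rpow_mul_one_sub_rpow (by positivity) hq]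
  refine setIntegral_congr_fun measurableSet_Ioo fun x hx => ?_
  rw [add_sub_right_comm, Real.rpow_add_natCast hx.1.ne', mul_right_comm]

lemma integrableOn_rpow_mul_one_sub_rpow_mul_pow {p q : ℝ} (hp : 0 < p) (hq : 0 < q) (k : ℕ) :
    IntegrableOn (fun x : ℝ => x ^ (p - 1) * (1 - x) ^ (q - 1) * x ^ k) (Ioo 0 1) := by
  refine .of_integral_ne_zero ?_
  rw [integral_rpow_mul_one_sub_rpow_mul_pow hp hq]
  exact (betaFn_pos (by positivity) hq).ne'

lemma betaFn_add_natCast {p q : ℝ} (hp : ∀ k : ℕ, p ≠ -k) (hpq : ∀ k : ℕ, p + q ≠ -k) (n : ℕ) :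
    betaFn (p + n) q =
      betaFn p q * ((ascPochhammer ℝ n).eval p / (ascPochhammer ℝ n).eval (p + q)) := by
  rw [betaFn, betaFn, add_right_comm, Gamma_add_natCast hp, Gamma_add_natCast hpq]
  ring

lemma ne_neg_natCast {x : ℝ} (hx : 0 < x) (k : ℕ) : x ≠ -k :=
  ((neg_nonpos.mpr k.cast_nonneg).trans_lt hx).ne'

lemma norm_lt_one_of_mem_Ioo {x : ℝ} (hx : x ∈ Ioo 0 1) : ‖x‖ < 1 :=
  abs_lt.mpr ⟨neg_one_lt_zero.trans hx.1, hx.2⟩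

theorem betaFn_mul_threeF2_eq_integral {p q : ℝ} (hp : 0 < p) (hq : 0 < q) {a b c : ℝ}
    (ha : 0 ≤ a) (hb : 0 ≤ b) (hc : 0 ≤ c) :
    betaFn p q * threeF2 p a b c (p + q) =
      ∫ x in Ioo (0 : ℝ) 1, x ^ (p - 1) * (1 - x) ^ (q - 1) * ₂F₁ a b c x := by
  set u := ordinaryHypergeometricCoefficient a b c
  set f : ℕ → ℝ → ℝ := fun k x => u k * (x ^ (p - 1) * (1 - x) ^ (q - 1) * x ^ k)
  have hf_integrable (k : ℕ) : IntegrableOn (f k) (Ioo 0 1) :=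
    (integrableOn_rpow_mul_one_sub_rpow_mul_pow hp hq k).const_mul (u k)
  have hf_nonneg : ∀ᵐ x ∂volume.restrict (Ioo 0 1), ∀ k, 0 ≤ f k x := by
    filter_upwards [ae_restrict_mem measurableSet_Ioo] with x ⟨hx0, hx1⟩ k
    have hu : 0 ≤ u k := ordinaryHypergeometricCoefficient_nonneg ha hb hc k
    have := sub_pos.mpr hx1
    positivity
  have hf_eq (k : ℕ) (x : ℝ) : f k x = x ^ (p - 1) * (1 - x) ^ (q - 1) * (u k * x ^ k) :=
    mul_left_comm _ _ _
  have hf_summable : ∀ᵐ x ∂volume.restrict (Ioo 0 1), Summable fun k => f k x := by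
    filter_upwards [ae_restrict_mem measurableSet_Ioo] with x hx
    simp only [hf_eq]
    exact (summable_norm_ordinaryHypergeometricCoefficient_mul_pow a b c
      (norm_lt_one_of_mem_Ioo hx)).of_norm.mul_left _
  calc betaFn p q * threeF2 p a b c (p + q)
      = ∑' k, ∫ x in Ioo (0 : ℝ) 1, f k x := by
        rw [threeF2, ← tsum_mul_left]
        refine tsum_congr fun k => ?_
        rw [integral_const_mul, integral_rpow_mul_one_sub_rpow_mul_pow hp hq,
          betaFn_add_natCast (ne_neg_natCast hp) (ne_neg_natCast (add_pos hp hq))]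
        simp only [poch_eq_eval_ascPochhammer, u, ordinaryHypergeometricCoefficient]
        ring
    _ = ∫ x in Ioo (0 : ℝ) 1, ∑' k, f k x :=
        (integral_tsum_of_nonneg hf_integrable hf_nonneg hf_summable).symm
    _ = ∫ x in Ioo (0 : ℝ) 1, x ^ (p - 1) * (1 - x) ^ (q - 1) * ₂F₁ a b c x := by
        simp only [hf_eq, tsum_mul_left, ordinaryHypergeometric_eq_tsum, smul_eq_mul, u,
          ordinaryHypergeometricCoefficient]

theorem threeF2_eq_Gamma_div_mul_threeF2 {a b c d e : ℝ} (ha : 0 < a) (hb : 0 ≤ b) (hc : 0 ≤ c)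
    (hd : 0 < d) (hbd : b ≤ d) (hcd : c ≤ d) (hae : a < e) (hs : 0 < d + e - a - b - c) :
    threeF2 a b c d e = Real.Gamma e * Real.Gamma (d + e - a - b - c) /
      (Real.Gamma (e - a) * Real.Gamma (d + e - b - c)) *
        threeF2 a (d - b) (d - c) d (d + e - b - c) := by
  have hsum : a + (d + e - a - b - c) = d + e - b - c := by ring
  have hea : 0 < e - a := sub_pos.mpr hae
  have hbeta : betaFn a (e - a) * threeF2 a b c d e =
      betaFn a (d + e - a - b - c) * threeF2 a (d - b) (d - c) d (d + e - b - c) := by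
    have hleft := betaFn_mul_threeF2_eq_integral ha hea hb hc hd.le
    have hright :=
      betaFn_mul_threeF2_eq_integral ha hs (sub_nonneg.mpr hbd) (sub_nonneg.mpr hcd) hd.le
    rw [add_sub_cancel] at hleft
    rw [hsum] at hright
    rw [hleft, hright]
    refine setIntegral_congr_fun measurableSet_Ioo fun x hx => ?_
    have hpow : (1 - x) ^ (d + e - a - b - c - 1) =
        (1 - x) ^ (e - a - 1) * (1 - x) ^ (d - b - c) := by
      rw [← Real.rpow_add (sub_pos.mpr hx.2)]
      ring_nf
    rw [ordinaryHypergeometric_eq_rpow_mul b c (ne_neg_natCast hd) (norm_lt_one_of_mem_Ioo hx),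
      hpow]
    ring
  have hΓ {y : ℝ} (hy : 0 < y) : Real.Gamma y ≠ 0 := (Real.Gamma_pos_of_pos hy).ne'
  have := hΓ ha
  have := hΓ hea
  have := hΓ (ha.trans hae)
  have := hΓ (show 0 < d + e - b - c by linarith)
  rw [betaFn, betaFn, add_sub_cancel, hsum] at hbeta
  field_simp at hbeta ⊢
  linear_combination hbeta

lemma betaFn_mul_threeF2_one_half {r s : ℝ} (hr0 : 0 < r) (hr1 : r < 1) (hs : 1 / 2 < s)
    (hrs : r < s) :
    betaFn r (s - r) * threeF2 (1 / 2) (1 / 2) r 1 s =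
      Real.Gamma r * Real.Gamma (s - r) ^ 2 / (Real.Gamma (1 - r) * Real.Gamma (s - 1 / 2) ^ 2) *
        (betaFn (1 - r) (s - 1 / 2) * threeF2 (1 / 2) (1 / 2) (1 - r) 1 (1 / 2 - r + s)) := by
  have hkummer := threeF2_eq_Gamma_div_mul_threeF2 (a := 1 / 2) (b := 1 / 2) one_half_pos
    one_half_pos.le hr0.le one_pos one_half_lt_one.le hr1.le hs (by linarith)
  have hΓ {y : ℝ} (hy : 0 < y) : Real.Gamma y ≠ 0 := (Real.Gamma_pos_of_pos hy).ne'
  have := hΓ (show 0 < s by linarith)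
  have := hΓ (sub_pos.mpr hs)
  have := hΓ (sub_pos.mpr hr1)
  rw [show 1 + s - 1 / 2 - 1 / 2 - r = s - r by ring,
    show 1 + s - 1 / 2 - r = 1 / 2 - r + s by ring, sub_half] at hkummer
  rw [hkummer, betaFn, betaFn, add_sub_cancel, show 1 - r + (s - 1 / 2) = 1 / 2 - r + s by ring]
  field_simp

/-- Kummer's transformation in the normalization F:
F(r,s) = 2^{4−8r}·Γ(r)Γ(s−r)²/(Γ(1−r)Γ(s−1/2)²)·F(1−r, 1/2−r+s). -/
theorem kummer_transformation (r s : ℚ) (hr0 : 0 < r) (hr1 : r < 1)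
    (hs : 1/2 < s) (hrs : r < s) :
    Fval r s = (2:ℝ) ^ ((4:ℝ) - 8 * (r:ℝ)) *
      (Real.Gamma (r:ℝ) * Real.Gamma ((s:ℝ) - (r:ℝ)) ^ 2 /
        (Real.Gamma (1 - (r:ℝ)) * Real.Gamma ((s:ℝ) - 1/2) ^ 2)) *
      Fval (1 - r) (1/2 - r + s) := by
  have hkummer := betaFn_mul_threeF2_one_half (r := r) (s := s) (mod_cast hr0) (mod_cast hr1)
    (by simpa using (Rat.cast_lt (K := ℝ)).mpr hs) (mod_cast hrs)
  have hpow : (2 : ℝ) ^ (1 - 4 * (r : ℝ)) =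
      2 ^ (4 - 8 * (r : ℝ)) * 2 ^ (1 - 4 * (1 - (r : ℝ))) := by
    rw [← Real.rpow_add two_pos]
    ring_nf
  have hden : (1 - r).den = r.den := by simp
  have hsub : 1 / 2 - (r : ℝ) + s - (1 - r) = s - 1 / 2 := by ring
  simp only [Fval, hden]
  push_cast
  rw [hpow, hsub]
  linear_combination
    2 ^ (4 - 8 * (r : ℝ)) * 2 ^ (1 - 4 * (1 - (r : ℝ))) / (2 * r.den) * hkummer
end

section
/- In the complex numbers, F(1/8,5/8) − 8i·F(7/8,11/8) = (1 − i√2)·(2·F(3/8,7/8) + 4i·F(5/8,9/8)). -/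
/-!
Each `F(r, r + 1/2)` is an elementary multiple of Euler's integral
`M(r) = ∫₀¹ x ^ (r - 1) (1 - x) ^ (-1/2) ₂F₁(1/2, 1/2; 1; x) dx`, which can be evaluated in two ways
as an integral against the same weight `W(α) = K(sin² α) / √(sin 2α)` on `[0, π/2]`.

* The substitution `x = tan⁴ (α/2)` and Landen's transformation give
  `M(r) = 8/π ∫ tan (α/2) ^ (4r - 1/2) cos³ (α/2) W(α) dα`.
* Integrating over a keyhole contour around the slit `[0, 1]` in the unit disc relates `M(r)` to the
  boundary values of the integrand on the unit circle. They are combinations of `W(α)` and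
  `W(π/2 - α)` at the point `exp (4iα)`, and reflecting `α` gives
  `sin (πr) M(r) = 2√2/π ∫ cos ((4r - 2)(α - π/4) + π/4) W(α) dα`.

For `r = (2k + 1)/8` with `k ≤ 3` the first form is, up to the factor `8/π`, the moment of
`cos ^ (3 - k) (α/2) sin ^ k (α/2)`. At `r = 3/8` and `r = 5/8` the second form only involves the
moments of `cos (α/2)` and `sin (α/2)`, which are sums of two cubic moments because
`sin² + cos² = 1`. This yields two real linear relations between the four cubic moments: the real
and the imaginary part of the theorem.
-/

namespace ThreeTerm

open MeasureTheory Set Filter Topology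
open scoped Real Interval

/-- The Taylor coefficient `(a)_n / n!` of `(1 - z) ^ (-a)`. -/
noncomputable def binomCoeff (a : ℝ) (n : ℕ) : ℝ := poch a n / n.factorial

lemma poch_succ (x : ℝ) (n : ℕ) : poch x (n + 1) = poch x n * (x + n) :=
  Finset.prod_range_succ _ _

lemma poch_eq_eval_ascPochhammer (x : ℝ) (n : ℕ) : poch x n = (ascPochhammer ℝ n).eval x := by
  induction n with
  | zero => simp [poch]
  | succ n ih => rw [poch_succ, ascPochhammer_succ_eval, ih]

lemma poch_pos {x : ℝ} (hx : 0 < x) (n : ℕ) : 0 < poch x n :=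
  Finset.prod_pos fun _ _ => by positivity

lemma poch_one (n : ℕ) : poch 1 n = n.factorial := by
  rw [poch_eq_eval_ascPochhammer, ascPochhammer_eval_one]

lemma binomCoeff_nonneg {a : ℝ} (ha : 0 < a) (n : ℕ) : 0 ≤ binomCoeff a n :=
  div_nonneg (poch_pos ha n).le (by positivity)

lemma binomCoeff_succ (a : ℝ) (n : ℕ) :
    binomCoeff a (n + 1) = binomCoeff a n * ((a + n) / (n + 1)) := by
  rw [binomCoeff, binomCoeff, poch_succ, Nat.factorial_succ]
  push_cast
  field_simp

lemma choose_add_sub_one_eq_binomCoeff (a : ℝ) (n : ℕ) :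
    Ring.choose ((a : ℂ) + n - 1) n = (binomCoeff a n : ℂ) := by
  have h := Ring.factorial_nsmul_multichoose_eq_ascPochhammer (a : ℂ) n
  rw [Polynomial.ascPochhammer_smeval_eq_eval, nsmul_eq_mul,
    ← ascPochhammer_map Complex.ofRealHom, Polynomial.eval_map,
    ← Complex.ofRealHom_eq_coe, Polynomial.eval₂_at_apply, ← poch_eq_eval_ascPochhammer] at h
  rw [Ring.choose, show (a : ℂ) + n - 1 - n + 1 = a by ring, binomCoeff, Complex.ofReal_div,
    eq_div_iff (by exact_mod_cast n.factorial_ne_zero), mul_comm]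
  simpa using h

lemma hasSum_binomCoeff_mul_pow (a : ℝ) {z : ℂ} (hz : ‖z‖ < 1) :
    HasSum (fun n => (binomCoeff a n : ℂ) * z ^ n) ((1 - z) ^ (-a : ℂ)) := by
  have h := (Complex.one_div_one_sub_cpow_hasFPowerSeriesOnBall_zero a).hasSum
    (y := z) (by simpa [enorm_eq_nnnorm, ← NNReal.coe_lt_one] using hz)
  rw [zero_add, one_div, ← Complex.cpow_neg] at h
  simpa [FormalMultilinearSeries.ofScalars, choose_add_sub_one_eq_binomCoeff, mul_comm] using h

lemma hasSum_binomCoeff_mul_pow_real (a : ℝ) {x : ℝ} (h0 : 0 ≤ x) (h1 : x < 1) :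
    HasSum (fun n => binomCoeff a n * x ^ n) ((1 - x) ^ (-a)) := by
  rw [← Complex.hasSum_ofReal, Complex.ofReal_cpow (sub_nonneg.2 h1.le)]
  simpa using hasSum_binomCoeff_mul_pow a (z := x) (by simpa [abs_of_nonneg h0] using h1)

lemma binomCoeff_half_sq_le (n : ℕ) : binomCoeff (1 / 2) n ^ 2 ≤ binomCoeff (1 / 4) n := by
  induction n with
  | zero => simp [binomCoeff, poch]
  | succ n ih =>
    rw [binomCoeff_succ, binomCoeff_succ, mul_pow]
    refine mul_le_mul ih ?_ (by positivity) (binomCoeff_nonneg (by norm_num) n)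
    rw [div_pow, div_le_div_iff₀ (by positivity) (by positivity)]
    nlinarith [n.cast_nonneg (α := ℝ)]

/-- The principal branch of `(1 - z) ^ (-1/2)`. -/
noncomputable def invSqrt (z : ℂ) : ℂ := (1 - z) ^ (-(1 / 2 : ℝ) : ℂ)

/-- The Gauss series `₂F₁(1/2, 1/2; 1; z)`, which is `2 / π` times the complete elliptic integral
of the first kind with parameter `z`. -/
noncomputable def gaussK (z : ℂ) : ℂ := ∑' n : ℕ, (binomCoeff (1 / 2) n : ℂ) ^ 2 * z ^ n

lemma hasSum_invSqrt {z : ℂ} (hz : ‖z‖ < 1) :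
    HasSum (fun n => (binomCoeff (1 / 2) n : ℂ) * z ^ n) (invSqrt z) :=
  hasSum_binomCoeff_mul_pow _ hz

lemma norm_binomCoeff_half_sq_mul_pow_le (z : ℂ) (n : ℕ) :
    ‖(binomCoeff (1 / 2) n : ℂ) ^ 2 * z ^ n‖ ≤ binomCoeff (1 / 4) n * ‖z‖ ^ n := by
  rw [norm_mul, norm_pow, norm_pow, Complex.norm_real, Real.norm_eq_abs, sq_abs]
  gcongr
  exact binomCoeff_half_sq_le n

lemma hasSum_gaussK {z : ℂ} (hz : ‖z‖ < 1) :
    HasSum (fun n : ℕ => (binomCoeff (1 / 2) n : ℂ) ^ 2 * z ^ n) (gaussK z) :=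
  (Summable.of_norm_bounded (hasSum_binomCoeff_mul_pow_real (1 / 4) (norm_nonneg z) hz).summable
    (norm_binomCoeff_half_sq_mul_pow_le z)).hasSum

lemma norm_gaussK_le {z : ℂ} (hz : ‖z‖ < 1) : ‖gaussK z‖ ≤ (1 - ‖z‖) ^ (-(1 / 4) : ℝ) :=
  tsum_of_norm_bounded (hasSum_binomCoeff_mul_pow_real (1 / 4) (norm_nonneg z) hz)
    (norm_binomCoeff_half_sq_mul_pow_le z)

lemma one_sub_mem_slitPlane {z : ℂ} (hz : ‖z‖ < 1) : 1 - z ∈ Complex.slitPlane := by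
  rw [sub_eq_add_neg]
  exact Complex.mem_slitPlane_of_norm_lt_one (by rwa [norm_neg])

lemma differentiableOn_invSqrt : DifferentiableOn ℂ invSqrt (Metric.ball 0 1) := fun _ hz =>
  (((differentiableAt_const _).sub differentiableAt_id).cpow (differentiableAt_const _)
    (one_sub_mem_slitPlane (mem_ball_zero_iff.1 hz))).differentiableWithinAt

lemma differentiableOn_gaussK : DifferentiableOn ℂ gaussK (Metric.ball 0 1) := by
  intro z hz
  obtain ⟨r, hzr, hr1⟩ := exists_between (mem_ball_zero_iff.1 hz)
  refine DifferentiableAt.differentiableWithinAt ?_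
  refine (Complex.differentiableOn_tsum_of_summable_norm (hasSum_binomCoeff_mul_pow_real (1 / 4)
    ((norm_nonneg z).trans hzr.le) hr1).summable (fun n => by fun_prop) Metric.isOpen_ball
    fun n w hw => ?_).differentiableAt (Metric.isOpen_ball.mem_nhds (mem_ball_zero_iff.2 hzr))
  refine (norm_binomCoeff_half_sq_mul_pow_le w n).trans ?_
  gcongr
  exacts [binomCoeff_nonneg (by norm_num) n, (mem_ball_zero_iff.1 hw).le]

/-! ### The arithmetic-geometric mean form of `gaussK` -/

lemma norm_invSqrt (z : ℂ) : ‖invSqrt z‖ = (√‖1 - z‖)⁻¹ := by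
  rw [invSqrt, ← Complex.ofReal_neg, Complex.norm_cpow_real, Real.rpow_neg (norm_nonneg _),
    Real.sqrt_eq_rpow]

lemma invSqrt_conj {z : ℂ} (hz : 1 - z ∈ Complex.slitPlane) :
    invSqrt ((starRingEnd ℂ) z) = (starRingEnd ℂ) (invSqrt z) := by
  have h := Complex.conj_cpow (1 - z) (-(1 / 2 : ℝ)) (Complex.slitPlane_arg_ne_pi hz)
  rwa [map_sub, map_one, map_neg, Complex.conj_ofReal] at h

lemma invSqrt_mul_conj {z : ℂ} (hz : 1 - z ∈ Complex.slitPlane) :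
    invSqrt z * invSqrt ((starRingEnd ℂ) z) = ((‖1 - z‖)⁻¹ : ℝ) := by
  rw [invSqrt_conj hz, Complex.mul_conj, Complex.normSq_eq_norm_sq, norm_invSqrt, inv_pow,
    Real.sq_sqrt (norm_nonneg _)]

lemma integral_circleMap_pow_mul_pow (m n : ℕ) :
    ∫ θ in -π..π, circleMap 0 1 θ ^ m * circleMap 0 1 (-θ) ^ n =
      if m = n then (2 * π : ℂ) else 0 := by
  have hexp (θ : ℝ) : circleMap 0 1 θ ^ m * circleMap 0 1 (-θ) ^ n =
      Complex.exp (((m : ℂ) - n) * Complex.I * θ) := by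
    simp only [circleMap_zero, Complex.ofReal_one, one_mul, ← Complex.exp_nat_mul,
      ← Complex.exp_add, Complex.ofReal_neg]
    ring_nf
  simp_rw [hexp]
  split_ifs with hmn
  · simp [hmn, two_mul]
  · have hc : ((m : ℂ) - n) * Complex.I ≠ 0 :=
      mul_ne_zero (sub_ne_zero.2 (by exact_mod_cast hmn)) Complex.I_ne_zero
    rw [integral_exp_mul_complex hc, div_eq_zero_iff, sub_eq_zero]
    refine Or.inl (Complex.exp_eq_exp_iff_exists_int.2 ⟨(m : ℤ) - n, ?_⟩)
    push_cast
    ring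

lemma hasSum_mul_circleMap_pow {c : ℕ → ℂ} (hc : Summable fun n => ‖c n‖) (θ : ℝ) :
    HasSum (fun n => c n * circleMap 0 1 θ ^ n) (∑' n, c n * circleMap 0 1 θ ^ n) :=
  (hc.of_norm_bounded fun n => by simp).hasSum

lemma hasSum_integral_tsum_mul_tsum {a b : ℕ → ℂ} (ha : Summable fun n => ‖a n‖)
    (hb : Summable fun n => ‖b n‖) :
    HasSum (fun n => 2 * π * (a n * b n)) (∫ θ in -π..π,
      (∑' n, a n * circleMap 0 1 θ ^ n) * ∑' n, b n * circleMap 0 1 (-θ) ^ n) := by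
  have hab := ha.mul_of_nonneg hb (fun _ => norm_nonneg _) fun _ => norm_nonneg _
  have hnorm (p : ℕ × ℕ) (θ : ℝ) :
      ‖a p.1 * b p.2 * (circleMap 0 1 θ ^ p.1 * circleMap 0 1 (-θ) ^ p.2)‖ = ‖a p.1‖ * ‖b p.2‖ := by
    simp
  have hprod (θ : ℝ) : HasSum
      (fun p : ℕ × ℕ => a p.1 * b p.2 * (circleMap 0 1 θ ^ p.1 * circleMap 0 1 (-θ) ^ p.2))
      ((∑' n, a n * circleMap 0 1 θ ^ n) * ∑' n, b n * circleMap 0 1 (-θ) ^ n) := by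
    simpa only [mul_mul_mul_comm] using (hasSum_mul_circleMap_pow ha θ).mul
      (hasSum_mul_circleMap_pow hb (-θ)) (hab.of_norm_bounded fun p => by simp)
  have hdouble := intervalIntegral.hasSum_integral_of_dominated_convergence (μ := volume)
    (a := -π) (b := π)
    (F := fun p θ => a p.1 * b p.2 * (circleMap 0 1 θ ^ p.1 * circleMap 0 1 (-θ) ^ p.2))
    (fun (p : ℕ × ℕ) _ => ‖a p.1‖ * ‖b p.2‖)
    (fun p => Continuous.aestronglyMeasurable (by fun_prop))
    (fun p => .of_forall fun θ _ => (hnorm p θ).le)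
    (.of_forall fun θ _ => hab) intervalIntegrable_const (.of_forall fun θ _ => hprod θ)
  simp_rw [intervalIntegral.integral_const_mul, integral_circleMap_pow_mul_pow] at hdouble
  have hdiag : Function.Injective fun n : ℕ => (n, n) := fun _ _ h => (Prod.mk.inj h).1
  rw [← hdiag.hasSum_iff] at hdouble
  · simpa only [Function.comp_def, if_true, mul_comm (2 * π : ℂ)] using hdouble
  · intro p hp
    rw [if_neg fun h => hp ⟨p.1, Prod.ext rfl h⟩, mul_zero]

lemma integral_neg_self_of_even {E : Type*} [NormedAddCommGroup E] [NormedSpace ℝ E] {f : ℝ → E}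
    (hf : f.Even) {a : ℝ} (hi : IntervalIntegrable f volume 0 a) :
    ∫ x in -a..a, f x = (2 : ℝ) • ∫ x in (0 : ℝ)..a, f x := by
  have hneg : ∫ x in -a..0, f x = ∫ x in (0 : ℝ)..a, f x := by
    rw [← neg_zero, ← intervalIntegral.integral_comp_neg]
    simp only [hf _, neg_zero]
  have hi' : IntervalIntegrable f volume (-a) 0 := by
    simpa only [hf _, neg_zero, zero_sub] using (hi.comp_sub_left 0).symm
  rw [← intervalIntegral.integral_add_adjacent_intervals hi' hi, hneg, two_smul]

/-- The integrand, in the variable `φ`, of the arithmetic-geometric mean form of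
`gaussK (ρ ^ 2 * exp (4 * I * α))`. -/
noncomputable def agmKernel (ρ α φ : ℝ) : ℂ :=
  invSqrt (circleMap 0 ρ (2 * (α + φ))) * invSqrt (circleMap 0 ρ (2 * (α - φ)))

lemma norm_circleMap_zero_lt {ρ : ℝ} (h0 : 0 ≤ ρ) (h1 : ρ < 1) (θ : ℝ) :
    ‖circleMap 0 ρ θ‖ < 1 := by
  rwa [norm_circleMap_zero, abs_of_nonneg h0]

lemma continuous_agmKernel {ρ : ℝ} (h0 : 0 ≤ ρ) (h1 : ρ < 1) (α : ℝ) :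
    Continuous (agmKernel ρ α) := by
  have h : Continuous fun θ => invSqrt (circleMap 0 ρ θ) :=
    differentiableOn_invSqrt.continuousOn.comp_continuous (continuous_circleMap 0 ρ) fun θ =>
      mem_ball_zero_iff.2 (norm_circleMap_zero_lt h0 h1 θ)
  exact (h.comp (by fun_prop : Continuous fun φ => 2 * (α + φ))).mul
    (h.comp (by fun_prop : Continuous fun φ => 2 * (α - φ)))

lemma even_agmKernel (ρ α : ℝ) : (agmKernel ρ α).Even := fun φ => by
  rw [agmKernel, agmKernel, sub_neg_eq_add, ← sub_eq_add_neg, mul_comm]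

lemma tsum_binomCoeff_mul_circleMap_pow {ρ : ℝ} (h0 : 0 ≤ ρ) (h1 : ρ < 1) (β θ : ℝ) :
    ∑' n, (binomCoeff (1 / 2) n : ℂ) * circleMap 0 ρ β ^ n * circleMap 0 1 θ ^ n =
      invSqrt (circleMap 0 ρ (β + θ)) := by
  rw [← (hasSum_invSqrt (norm_circleMap_zero_lt h0 h1 _)).tsum_eq]
  simp_rw [mul_assoc, ← mul_pow, circleMap_zero_mul, mul_one]

lemma two_pi_mul_gaussK_circleMap {ρ : ℝ} (h0 : 0 ≤ ρ) (h1 : ρ < 1) (β : ℝ) :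
    2 * π * gaussK (circleMap 0 (ρ ^ 2) (2 * β)) =
      ∫ θ in -π..π, invSqrt (circleMap 0 ρ (β + θ)) * invSqrt (circleMap 0 ρ (β - θ)) := by
  have hsum : Summable fun n => ‖(binomCoeff (1 / 2) n : ℂ) * circleMap 0 ρ β ^ n‖ :=
    (hasSum_invSqrt (norm_circleMap_zero_lt h0 h1 β)).summable.norm
  have hsq : circleMap 0 (ρ ^ 2) (2 * β) = circleMap 0 ρ β ^ 2 := by
    rw [circleMap_zero_pow, Nat.cast_ofNat]
  have hcoeff (n : ℕ) : 2 * π * ((binomCoeff (1 / 2) n : ℂ) * circleMap 0 ρ β ^ n *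
      ((binomCoeff (1 / 2) n : ℂ) * circleMap 0 ρ β ^ n)) =
      2 * π * ((binomCoeff (1 / 2) n : ℂ) ^ 2 * circleMap 0 (ρ ^ 2) (2 * β) ^ n) := by
    rw [hsq]
    ring
  have hparseval := hasSum_integral_tsum_mul_tsum hsum hsum
  simp_rw [tsum_binomCoeff_mul_circleMap_pow h0 h1, hcoeff, ← sub_eq_add_neg] at hparseval
  exact ((hasSum_gaussK <| norm_circleMap_zero_lt (sq_nonneg ρ)
    (pow_lt_one₀ h0 h1 two_ne_zero) _).mul_left (2 * π : ℂ)).unique hparseval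

lemma gaussK_circleMap {ρ : ℝ} (h0 : 0 ≤ ρ) (h1 : ρ < 1) (α : ℝ) :
    gaussK (circleMap 0 (ρ ^ 2) (4 * α)) =
      2 / π * ∫ φ in (0 : ℝ)..π / 2, agmKernel ρ α φ := by
  have hgauss := two_pi_mul_gaussK_circleMap h0 h1 (2 * α)
  have hscale : ∫ θ in -π..π, invSqrt (circleMap 0 ρ (2 * α + θ)) *
      invSqrt (circleMap 0 ρ (2 * α - θ)) = 4 * ∫ φ in (0 : ℝ)..π / 2, agmKernel ρ α φ := by
    have hsubst := intervalIntegral.smul_integral_comp_mul_left (a := -(π / 2)) (b := π / 2)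
      (fun θ => invSqrt (circleMap 0 ρ (2 * α + θ)) * invSqrt (circleMap 0 ρ (2 * α - θ))) 2
    have hhalf := integral_neg_self_of_even (even_agmKernel ρ α)
      ((continuous_agmKernel h0 h1 α).intervalIntegrable 0 (π / 2))
    simp only [mul_neg, mul_div_cancel₀ π two_ne_zero, ← mul_add, ← mul_sub] at hsubst
    simp only [agmKernel] at hhalf ⊢
    rw [← hsubst, hhalf, Complex.real_smul, Complex.real_smul]
    push_cast
    ring
  rw [hscale, ← mul_assoc 2, show (2 : ℝ) * 2 = 4 by norm_num] at hgauss
  have hpi : (π : ℂ) ≠ 0 := by exact_mod_cast Real.pi_ne_zero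
  rw [div_mul_eq_mul_div, eq_div_iff hpi]
  linear_combination hgauss / 2

/-- The complete elliptic integral of the first kind, as a function of the parameter `m = k ^ 2`. -/
noncomputable def ellK (m : ℝ) : ℝ :=
  ∫ φ in (0 : ℝ)..π / 2, (√(1 - m * Real.sin φ ^ 2))⁻¹

lemma integral_comp_pi_div_two_sub {E : Type*} [NormedAddCommGroup E] [NormedSpace ℝ E]
    (f : ℝ → E) : ∫ x in (0 : ℝ)..π / 2, f (π / 2 - x) = ∫ x in (0 : ℝ)..π / 2, f x := by
  rw [intervalIntegral.integral_comp_sub_left, sub_self, sub_zero]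

lemma norm_one_sub_circleMap (t φ : ℝ) :
    ‖1 - circleMap 0 (t ^ 2) (2 * φ)‖ =
      (1 + t ^ 2) * √(1 - (2 * t / (1 + t ^ 2)) ^ 2 * Real.cos φ ^ 2) := by
  have h0 : 0 ≤ 1 + t ^ 2 := by positivity
  rw [Complex.norm_eq_sqrt_sq_add_sq, Complex.sub_re, Complex.sub_im, circleMap_zero_re,
    circleMap_zero_im, Complex.one_re, Complex.one_im, ← Real.sqrt_sq h0,
    ← Real.sqrt_mul (sq_nonneg _), Real.sqrt_sq h0]
  congr 1
  field_simp
  linear_combination t ^ 4 * Real.sin_sq_add_cos_sq (2 * φ) - 2 * t ^ 2 * Real.cos_two_mul φ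

lemma agmKernel_zero {t : ℝ} (h0 : 0 ≤ t) (h1 : t < 1) (φ : ℝ) :
    agmKernel (t ^ 2) 0 (π / 2 - φ) =
      ((1 + t ^ 2)⁻¹ * (√(1 - (2 * t / (1 + t ^ 2)) ^ 2 * Real.sin φ ^ 2))⁻¹ : ℝ) := by
  have hnorm := norm_circleMap_zero_lt (sq_nonneg t) (pow_lt_one₀ h0 h1 two_ne_zero)
    (2 * (π / 2 - φ))
  rw [agmKernel, zero_add, zero_sub, mul_neg, ← conj_circleMap_zero,
    invSqrt_mul_conj (one_sub_mem_slitPlane hnorm), norm_one_sub_circleMap,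
    Real.cos_pi_div_two_sub, mul_inv]

lemma gaussK_pow_four {t : ℝ} (h0 : 0 ≤ t) (h1 : t < 1) :
    gaussK ((t : ℂ) ^ 4) =
      (2 / π * (1 + t ^ 2)⁻¹ * ellK ((2 * t / (1 + t ^ 2)) ^ 2) : ℝ) := by
  have h := gaussK_circleMap (sq_nonneg t) (pow_lt_one₀ h0 h1 two_ne_zero) 0
  rw [← integral_comp_pi_div_two_sub] at h
  simp_rw [agmKernel_zero h0 h1] at h
  rw [intervalIntegral.integral_ofReal, intervalIntegral.integral_const_mul, ← ellK] at h
  rw [show (t : ℂ) ^ 4 = circleMap 0 ((t ^ 2) ^ 2) (4 * 0) by simp [circleMap, ← pow_mul], h]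
  push_cast
  ring

/-! ### Euler's integral -/

lemma ae_mem_Ioo_of_mem_uIoc {a b : ℝ} (hab : a ≤ b) : ∀ᵐ x, x ∈ Ι a b → x ∈ Ioo a b := by
  rw [uIoc_of_le hab]
  exact Ioo_ae_eq_Ioc.mem_iff.mono fun _ h => h.2

lemma intervalIntegrable_of_norm_le_Ioo {E : Type*} [NormedAddCommGroup E] {f : ℝ → E} {g : ℝ → ℝ}
    {a b : ℝ} (hab : a ≤ b) (hf : ContinuousOn f (Ioo a b)) (hg : IntervalIntegrable g volume a b)
    (h : ∀ x ∈ Ioo a b, ‖f x‖ ≤ g x) : IntervalIntegrable f volume a b := by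
  rw [intervalIntegrable_iff_integrableOn_Ioo_of_le hab] at hg ⊢
  exact hg.mono' (hf.aestronglyMeasurable measurableSet_Ioo) (ae_restrict_of_forall_mem
    measurableSet_Ioo h)

lemma betaIntegrand_eq {x : ℝ} (hx : x ∈ Ioo (0 : ℝ) 1) (a b : ℝ) :
    (x : ℂ) ^ (a - 1 : ℂ) * (1 - x : ℂ) ^ (b - 1 : ℂ) =
      (x ^ (a - 1) * (1 - x) ^ (b - 1) : ℝ) := by
  rw [Complex.ofReal_mul, Complex.ofReal_cpow hx.1.le, Complex.ofReal_cpow (sub_pos.2 hx.2).le]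
  push_cast
  rfl

lemma intervalIntegrable_rpow_mul_one_sub_rpow {a b : ℝ} (ha : 0 < a) (hb : 0 < b) :
    IntervalIntegrable (fun x : ℝ => x ^ (a - 1) * (1 - x) ^ (b - 1)) volume 0 1 := by
  have h := (Complex.betaIntegral_convergent (u := a) (v := b) ha hb).norm
  refine h.congr_uIoo fun x hx => ?_
  rw [uIoo_of_le zero_le_one] at hx
  simp only [betaIntegrand_eq hx, Complex.norm_real]
  exact Real.norm_of_nonneg (mul_nonneg (Real.rpow_nonneg hx.1.le _)
    (Real.rpow_nonneg (sub_pos.2 hx.2).le _))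

lemma integral_rpow_mul_one_sub_rpow {a b : ℝ} (ha : 0 < a) (hb : 0 < b) :
    ∫ x in (0 : ℝ)..1, x ^ (a - 1) * (1 - x) ^ (b - 1) = betaFn a b := by
  have h := Complex.betaIntegral_eq_Gamma_mul_div a b ha hb
  rw [Complex.betaIntegral, intervalIntegral.integral_congr_Ioo_of_le zero_le_one
    fun x hx => betaIntegrand_eq hx a b, intervalIntegral.integral_ofReal, ← Complex.ofReal_add,
    Complex.Gamma_ofReal, Complex.Gamma_ofReal, Complex.Gamma_ofReal] at h
  exact_mod_cast h

lemma Gamma_add_nat {x : ℝ} (hx : 0 < x) (n : ℕ) :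
    Real.Gamma (x + n) = poch x n * Real.Gamma x := by
  induction n with
  | zero => simp [poch]
  | succ n ih =>
    rw [Nat.cast_succ, ← add_assoc, Real.Gamma_add_one (by positivity), ih, poch_succ]
    ring

lemma betaFn_add_nat {a b : ℝ} (ha : 0 < a) (hb : 0 < b) (n : ℕ) :
    betaFn (a + n) b = betaFn a b * (poch a n / poch (a + b) n) := by
  rw [betaFn, betaFn, add_right_comm, Gamma_add_nat ha, Gamma_add_nat (add_pos ha hb)]
  ring

/-- The integrand `(1 - z) ^ (-1/2) * ₂F₁(1/2, 1/2; 1; z)`, without its power of `z`, of Euler's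
integral for `₃F₂(1/2, 1/2, r; 1, r + 1/2; 1)`. -/
noncomputable def eulerKernel (z : ℂ) : ℂ := invSqrt z * gaussK z

/-- Euler's integral for `B(r, 1/2) * ₃F₂(1/2, 1/2, r; 1, r + 1/2; 1)`. -/
noncomputable def eulerIntegral (r : ℝ) : ℂ :=
  ∫ x in (0 : ℝ)..1, ((x ^ (r - 1) : ℝ) : ℂ) * eulerKernel x

lemma differentiableOn_eulerKernel : DifferentiableOn ℂ eulerKernel (Metric.ball 0 1) :=
  differentiableOn_invSqrt.mul differentiableOn_gaussK

lemma norm_ofReal_of_mem_Ioo {x : ℝ} (hx : x ∈ Ioo (0 : ℝ) 1) : ‖(x : ℂ)‖ = x := by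
  rw [Complex.norm_real, Real.norm_of_nonneg hx.1.le]

lemma norm_invSqrt_ofReal {x : ℝ} (hx : x ∈ Ioo (0 : ℝ) 1) :
    ‖invSqrt x‖ = (1 - x) ^ (-(1 / 2) : ℝ) := by
  rw [norm_invSqrt, ← Complex.ofReal_one, ← Complex.ofReal_sub, Complex.norm_real,
    Real.norm_of_nonneg (sub_pos.2 hx.2).le, Real.rpow_neg (sub_pos.2 hx.2).le, Real.sqrt_eq_rpow]

lemma invSqrt_ofReal {x : ℝ} (hx : x ≤ 1) : invSqrt x = ((1 - x) ^ (-(1 / 2) : ℝ) : ℝ) := by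
  rw [invSqrt, Complex.ofReal_cpow (sub_nonneg.2 hx)]
  push_cast
  rfl

lemma rpow_mul_one_sub_rpow_add {x : ℝ} (hx : x ∈ Ioo (0 : ℝ) 1) (a : ℝ) :
    x ^ a * (1 - x) ^ (-(1 / 2) : ℝ) * (1 - x) ^ (-(1 / 4) : ℝ) =
      x ^ a * (1 - x) ^ ((1 / 4 : ℝ) - 1) := by
  rw [mul_assoc, ← Real.rpow_add (sub_pos.2 hx.2)]
  norm_num

lemma intervalIntegrable_rpow_mul_eulerKernel {r : ℝ} (hr : 0 < r) :
    IntervalIntegrable (fun x : ℝ => ((x ^ (r - 1) : ℝ) : ℂ) * eulerKernel x) volume 0 1 := by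
  refine intervalIntegrable_of_norm_le_Ioo zero_le_one (ContinuousOn.mul ?_ ?_)
    (intervalIntegrable_rpow_mul_one_sub_rpow hr (by norm_num : (0 : ℝ) < 1 / 4)) fun x hx => ?_
  · exact Complex.continuous_ofReal.comp_continuousOn
      (continuousOn_id.rpow_const fun x hx => Or.inl hx.1.ne')
  · exact differentiableOn_eulerKernel.continuousOn.comp Complex.continuous_ofReal.continuousOn
      fun x hx => mem_ball_zero_iff.2 ((norm_ofReal_of_mem_Ioo hx).trans_lt hx.2)
  · have hx' := norm_ofReal_of_mem_Ioo hx
    have hG := norm_gaussK_le (hx'.trans_lt hx.2)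
    rw [hx'] at hG
    rw [← rpow_mul_one_sub_rpow_add hx, eulerKernel, norm_mul, norm_mul, norm_invSqrt_ofReal hx,
      Complex.norm_real, Real.norm_of_nonneg (Real.rpow_nonneg hx.1.le _), ← mul_assoc]
    gcongr
    exact mul_nonneg (Real.rpow_nonneg hx.1.le _) (Real.rpow_nonneg (sub_pos.2 hx.2).le _)

/-- The `n`-th term of the expansion of the integrand of `eulerIntegral r`. -/
noncomputable def eulerTerm (r : ℝ) (n : ℕ) (x : ℝ) : ℝ :=
  binomCoeff (1 / 2) n ^ 2 * (x ^ (r + n - 1) * (1 - x) ^ ((1 / 2 : ℝ) - 1))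

lemma eulerTerm_eq {x : ℝ} (hx : x ∈ Ioo (0 : ℝ) 1) (r : ℝ) (n : ℕ) :
    eulerTerm r n x =
      x ^ (r - 1) * (1 - x) ^ (-(1 / 2) : ℝ) * (binomCoeff (1 / 2) n ^ 2 * x ^ n) := by
  rw [eulerTerm, show r + n - 1 = r - 1 + n by ring, Real.rpow_add_natCast hx.1.ne']
  ring_nf

lemma integral_eulerTerm {r : ℝ} (hr : 0 < r) (n : ℕ) :
    ∫ x in (0 : ℝ)..1, eulerTerm r n x =
      betaFn r (1 / 2) * (poch (1 / 2) n * poch (1 / 2) n * poch r n /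
        (poch 1 n * poch (r + 1 / 2) n * n.factorial)) := by
  simp only [eulerTerm]
  rw [intervalIntegral.integral_const_mul, integral_rpow_mul_one_sub_rpow (by positivity)
    (by norm_num), betaFn_add_nat hr (by norm_num), binomCoeff, poch_one]
  ring

lemma hasSum_integral_eulerTerm {r : ℝ} (hr : 0 < r) :
    HasSum (fun n => ∫ x in (0 : ℝ)..1, (eulerTerm r n x : ℂ)) (eulerIntegral r) := by
  have hbound {x : ℝ} (hx : x ∈ Ioo (0 : ℝ) 1) :
      HasSum (fun n => x ^ (r - 1) * (1 - x) ^ (-(1 / 2) : ℝ) * (binomCoeff (1 / 4) n * x ^ n))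
        (x ^ (r - 1) * (1 - x) ^ ((1 / 4 : ℝ) - 1)) := by
    rw [← rpow_mul_one_sub_rpow_add hx]
    exact (hasSum_binomCoeff_mul_pow_real _ hx.1.le hx.2).mul_left _
  have hpos {x : ℝ} (hx : x ∈ Ioo (0 : ℝ) 1) : 0 ≤ x ^ (r - 1) * (1 - x) ^ (-(1 / 2) : ℝ) :=
    mul_nonneg (Real.rpow_nonneg hx.1.le _) (Real.rpow_nonneg (sub_pos.2 hx.2).le _)
  have hIoo := ae_mem_Ioo_of_mem_uIoc (zero_le_one (α := ℝ))
  refine intervalIntegral.hasSum_integral_of_dominated_convergence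
    (fun n x => x ^ (r - 1) * (1 - x) ^ (-(1 / 2) : ℝ) * (binomCoeff (1 / 4) n * x ^ n))
    (fun n => ?_) (fun n => hIoo.mono fun x hx hxI => ?_)
    (hIoo.mono fun x hx hxI => (hbound (hx hxI)).summable) ?_ (hIoo.mono fun x hx hxI => ?_)
  · unfold eulerTerm
    exact Measurable.aestronglyMeasurable (by fun_prop)
  · rw [Complex.norm_real, eulerTerm_eq (hx hxI), Real.norm_of_nonneg (mul_nonneg (hpos (hx hxI))
      (mul_nonneg (sq_nonneg _) (pow_nonneg (hx hxI).1.le n)))]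
    exact mul_le_mul_of_nonneg_left (mul_le_mul_of_nonneg_right (binomCoeff_half_sq_le n)
      (pow_nonneg (hx hxI).1.le n)) (hpos (hx hxI))
  · refine (intervalIntegrable_rpow_mul_one_sub_rpow hr (by norm_num : (0 : ℝ) < 1 / 4)).congr_uIoo
      fun x hx => ?_
    rw [uIoo_of_le zero_le_one] at hx
    exact (hbound hx).tsum_eq.symm
  · have hsum := (hasSum_gaussK ((norm_ofReal_of_mem_Ioo (hx hxI)).trans_lt (hx hxI).2)).mul_left
      (((x ^ (r - 1) * (1 - x) ^ (-(1 / 2) : ℝ) : ℝ) : ℂ))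
    simp_rw [eulerTerm_eq (hx hxI), eulerKernel, invSqrt_ofReal (hx hxI).2.le]
    push_cast [mul_assoc] at hsum ⊢
    exact hsum

lemma betaFn_mul_threeF2 {r : ℝ} (hr : 0 < r) :
    (betaFn r (1 / 2) * threeF2 (1 / 2) (1 / 2) r 1 (r + 1 / 2) : ℝ) = eulerIntegral r := by
  simp only [← (hasSum_integral_eulerTerm hr).tsum_eq, intervalIntegral.integral_ofReal,
    integral_eulerTerm hr, ← Complex.ofReal_tsum, tsum_mul_left, threeF2]

/-! ### The substitution `x = tan⁴ (α / 2)` -/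

/-- `K(sin² α) / √(sin 2α)`, the weight in both trigonometric forms of `eulerIntegral`. -/
noncomputable def ellWeight (α : ℝ) : ℝ := ellK (Real.sin α ^ 2) * (√(Real.sin (2 * α)))⁻¹

section TanHalf

variable {α : ℝ}

lemma cos_half_pos (hα : α ∈ Icc 0 (π / 2)) : 0 < Real.cos (α / 2) :=
  Real.cos_pos_of_mem_Ioo ⟨by linarith [Real.pi_pos, hα.1], by linarith [Real.pi_pos, hα.2]⟩

lemma tan_half_mem_Ioo (hα : α ∈ Ioo 0 (π / 2)) : Real.tan (α / 2) ∈ Ioo (0 : ℝ) 1 := by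
  refine ⟨Real.tan_pos_of_pos_of_lt_pi_div_two (half_pos hα.1)
    (by linarith [Real.pi_pos, hα.2]), ?_⟩
  rw [← Real.tan_pi_div_four]
  exact Real.tan_lt_tan_of_lt_of_lt_pi_div_two (by linarith [Real.pi_pos, hα.1])
    (by linarith [Real.pi_pos]) (by linarith [hα.2])

lemma inv_one_add_tan_half_sq (hα : α ∈ Icc 0 (π / 2)) :
    (1 + Real.tan (α / 2) ^ 2)⁻¹ = Real.cos (α / 2) ^ 2 :=
  Real.inv_one_add_tan_sq (cos_half_pos hα).ne'

lemma two_mul_tan_half_div (hα : α ∈ Icc 0 (π / 2)) :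
    2 * Real.tan (α / 2) / (1 + Real.tan (α / 2) ^ 2) = Real.sin α := by
  have hc := (cos_half_pos hα).ne'
  rw [div_eq_mul_inv, inv_one_add_tan_half_sq hα, Real.tan_eq_sin_div_cos,
    ← mul_div_cancel₀ α two_ne_zero, Real.sin_two_mul, mul_div_cancel₀ α two_ne_zero]
  field_simp

lemma rpow_one_sub_tan_half_pow_four (hα : α ∈ Ioo 0 (π / 2)) :
    (1 - Real.tan (α / 2) ^ 4) ^ (-(1 / 2) : ℝ) =
      2 * √(Real.tan (α / 2)) * Real.cos (α / 2) ^ 3 * (√(Real.sin (2 * α)))⁻¹ := by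
  have hc := cos_half_pos (Ioo_subset_Icc_self hα)
  have ht := tan_half_mem_Ioo hα
  have hts : Real.tan (α / 2) * Real.cos (α / 2) = Real.sin (α / 2) := Real.tan_mul_cos hc.ne'
  have hsin : Real.sin (2 * α) = (1 - Real.tan (α / 2) ^ 4) *
      ((2 * Real.cos (α / 2) ^ 3) ^ 2 * Real.tan (α / 2)) := by
    have hcos : Real.cos α = Real.cos (α / 2) ^ 2 - Real.sin (α / 2) ^ 2 := by
      rw [← Real.cos_two_mul', mul_div_cancel₀ α two_ne_zero]
    have hsin : Real.sin α = 2 * Real.sin (α / 2) * Real.cos (α / 2) := by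
      rw [← Real.sin_two_mul, mul_div_cancel₀ α two_ne_zero]
    have hsq := Real.sin_sq_add_cos_sq (α / 2)
    rw [← hts] at hcos hsin hsq
    rw [Real.sin_two_mul, hcos, hsin]
    linear_combination (-4) * Real.tan (α / 2) * Real.cos (α / 2) ^ 4 *
      (1 - Real.tan (α / 2) ^ 2) * hsq
  have h1 : 0 < 1 - Real.tan (α / 2) ^ 4 := sub_pos.2 (pow_lt_one₀ ht.1.le ht.2 four_ne_zero)
  rw [hsin, Real.sqrt_mul h1.le, Real.sqrt_mul (sq_nonneg _), Real.sqrt_sq (by positivity),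
    Real.rpow_neg h1.le, Real.sqrt_eq_rpow (1 - _)]
  have hsqrt := Real.sqrt_pos.2 ht.1
  field_simp

lemma eulerKernel_tan_half_pow_four (hα : α ∈ Ioo 0 (π / 2)) :
    eulerKernel ((Real.tan (α / 2) ^ 4 : ℝ) : ℂ) =
      (4 / π * √(Real.tan (α / 2)) * Real.cos (α / 2) ^ 5 * ellWeight α : ℝ) := by
  have ht := tan_half_mem_Ioo hα
  have hα' := Ioo_subset_Icc_self hα
  rw [eulerKernel, invSqrt_ofReal (pow_le_one₀ ht.1.le ht.2.le), Complex.ofReal_pow,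
    gaussK_pow_four ht.1.le ht.2, two_mul_tan_half_div hα', inv_one_add_tan_half_sq hα',
    rpow_one_sub_tan_half_pow_four hα, ellWeight]
  push_cast
  ring

lemma hasDerivAt_tan_half_pow_four (hα : α ∈ Icc 0 (π / 2)) :
    HasDerivAt (fun α => Real.tan (α / 2) ^ 4)
      (2 * Real.tan (α / 2) ^ 3 / Real.cos (α / 2) ^ 2) α := by
  refine (((Real.hasDerivAt_tan (cos_half_pos hα).ne').comp α
    ((hasDerivAt_id α).div_const 2)).pow 4).congr_deriv ?_
  simp only [Function.comp_apply, id_eq]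
  ring

lemma deriv_smul_eulerIntegrand_tan_half (hα : α ∈ Ioo 0 (π / 2)) (r : ℝ) :
    (2 * Real.tan (α / 2) ^ 3 / Real.cos (α / 2) ^ 2) •
      ((((Real.tan (α / 2) ^ 4) ^ (r - 1) : ℝ) : ℂ) *
        eulerKernel ((Real.tan (α / 2) ^ 4 : ℝ) : ℂ)) =
      (8 / π * (Real.tan (α / 2) ^ (4 * r - 1 / 2) * Real.cos (α / 2) ^ 3 * ellWeight α) : ℝ) := by
  have ht := (tan_half_mem_Ioo hα).1
  have hc := (cos_half_pos (Ioo_subset_Icc_self hα)).ne'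
  have hpow : Real.tan (α / 2) ^ (4 * r - 1 / 2) =
      Real.tan (α / 2) ^ 3 * (Real.tan (α / 2) ^ 4) ^ (r - 1) * √(Real.tan (α / 2)) := by
    rw [Real.sqrt_eq_rpow, ← Real.rpow_natCast, ← Real.rpow_natCast, ← Real.rpow_mul ht.le,
      ← Real.rpow_add ht, ← Real.rpow_add ht]
    norm_num
    ring_nf
  rw [eulerKernel_tan_half_pow_four hα, Complex.real_smul, ← Complex.ofReal_mul,
    ← Complex.ofReal_mul, hpow]
  congr 1
  field_simp
  ring

end TanHalf

lemma tan_half_substitution_conditions :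
    ContinuousOn (fun α => Real.tan (α / 2) ^ 4) [[0, π / 2]] ∧
    (∀ α ∈ Ioo (min 0 (π / 2)) (max 0 (π / 2)), HasDerivAt (fun α => Real.tan (α / 2) ^ 4)
      (2 * Real.tan (α / 2) ^ 3 / Real.cos (α / 2) ^ 2) α) ∧
    ∀ α ∈ Ioo (min 0 (π / 2)) (max 0 (π / 2)),
      0 ≤ 2 * Real.tan (α / 2) ^ 3 / Real.cos (α / 2) ^ 2 := by
  rw [uIcc_of_le Real.pi_div_two_pos.le, min_eq_left Real.pi_div_two_pos.le,
    max_eq_right Real.pi_div_two_pos.le]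
  refine ⟨fun α hα => (hasDerivAt_tan_half_pow_four hα).continuousAt.continuousWithinAt,
    fun α hα => hasDerivAt_tan_half_pow_four (Ioo_subset_Icc_self hα), fun α hα => ?_⟩
  have htan := (tan_half_mem_Ioo hα).1
  positivity

lemma tan_half_pow_four_endpoints :
    Real.tan (0 / 2) ^ 4 = 0 ∧ Real.tan (π / 2 / 2) ^ 4 = 1 := by
  rw [zero_div, Real.tan_zero, div_div, show (2 : ℝ) * 2 = 4 by norm_num, Real.tan_pi_div_four]
  norm_num

lemma eulerIntegral_eq_integral_tan_half (r : ℝ) :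
    eulerIntegral r = (8 / π * ∫ α in (0 : ℝ)..π / 2,
      Real.tan (α / 2) ^ (4 * r - 1 / 2) * Real.cos (α / 2) ^ 3 * ellWeight α : ℝ) := by
  obtain ⟨hcont, hderiv, hnonneg⟩ := tan_half_substitution_conditions
  have h := intervalIntegral.integral_deriv_smul_comp_of_deriv_nonneg hcont hderiv hnonneg
    (g := fun x : ℝ => ((x ^ (r - 1) : ℝ) : ℂ) * eulerKernel x)
  simp only [Function.comp_apply, tan_half_pow_four_endpoints] at h
  rw [intervalIntegral.integral_congr_Ioo_of_le Real.pi_div_two_pos.le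
    fun α hα => deriv_smul_eulerIntegrand_tan_half hα r] at h
  rw [eulerIntegral, ← h, intervalIntegral.integral_ofReal, intervalIntegral.integral_const_mul]

lemma intervalIntegrable_ellWeight : IntervalIntegrable ellWeight volume 0 (π / 2) := by
  obtain ⟨hcont, hderiv, hnonneg⟩ := tan_half_substitution_conditions
  have h := (intervalIntegral.integrable_deriv_smul_comp_iff_of_deriv_nonneg hcont hderiv hnonneg
    (g := fun x : ℝ => ((x ^ ((1 / 8 : ℝ) - 1) : ℝ) : ℂ) * eulerKernel x)).2
  simp only [Function.comp_apply, tan_half_pow_four_endpoints] at h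
  have hint := intervalIntegrable_iff.2
    (intervalIntegrable_iff.1 (h (intervalIntegrable_rpow_mul_eulerKernel (by norm_num)))).re
  have hcos : ContinuousOn (fun α => π / 8 * (Real.cos (α / 2) ^ 3)⁻¹) [[0, π / 2]] := by
    rw [uIcc_of_le Real.pi_div_two_pos.le]
    exact continuousOn_const.mul (ContinuousOn.inv₀ (by fun_prop)
      fun α hα => pow_ne_zero 3 (cos_half_pos hα).ne')
  refine (hint.mul_continuousOn hcos).congr_uIoo fun α hα => ?_
  rw [uIoo_of_le Real.pi_div_two_pos.le] at hα
  have hc := (cos_half_pos (Ioo_subset_Icc_self hα)).ne'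
  simp only [deriv_smul_eulerIntegrand_tan_half hα, RCLike.re_eq_complex_re, Complex.ofReal_re]
  norm_num
  field_simp

/-- The integrand of the elliptic integral `ellK (sin² α)` in the amplitude variable. It vanishes
for `φ ∈ [α, π / 2]`, where `√` is applied to a nonpositive number. -/
noncomputable def arcKernel (α φ : ℝ) : ℝ := (√(Real.sin α ^ 2 - Real.sin φ ^ 2))⁻¹

lemma arcKernel_nonneg (α φ : ℝ) : 0 ≤ arcKernel α φ := inv_nonneg.2 (Real.sqrt_nonneg _)

lemma arcKernel_eq_zero {α φ : ℝ} (h0 : 0 ≤ α) (hαφ : α ≤ φ) (hφ : φ ≤ π / 2) :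
    arcKernel α φ = 0 := by
  have hsin := Real.sin_le_sin_of_le_of_le_pi_div_two (by linarith [Real.pi_pos]) hφ hαφ
  rw [arcKernel, Real.sqrt_eq_zero_of_nonpos, inv_zero]
  exact sub_nonpos.2 (pow_le_pow_left₀
    (Real.sin_nonneg_of_nonneg_of_le_pi h0 (by linarith [Real.pi_pos])) hsin 2)

lemma arcKernel_pi_div_two_sub (α φ : ℝ) :
    arcKernel (π / 2 - α) (π / 2 - φ) = (√(Real.sin φ ^ 2 - Real.sin α ^ 2))⁻¹ := by
  rw [arcKernel, Real.sin_pi_div_two_sub, Real.sin_pi_div_two_sub, Real.cos_sq', Real.cos_sq']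
  ring_nf

section Amplitude

variable {α : ℝ}

lemma sin_mem_Ioo (hα : α ∈ Ioo 0 (π / 2)) : Real.sin α ∈ Ioo (0 : ℝ) 1 := by
  refine ⟨Real.sin_pos_of_pos_of_lt_pi hα.1 (by linarith [Real.pi_pos, hα.2]), ?_⟩
  rw [← Real.sin_pi_div_two]
  exact Real.sin_lt_sin_of_lt_of_le_pi_div_two (by linarith [Real.pi_pos, hα.1]) le_rfl hα.2

lemma one_sub_sin_sq_mul_sin_sq_pos (hα : α ∈ Ioo 0 (π / 2)) (ψ : ℝ) :
    0 < 1 - Real.sin α ^ 2 * Real.sin ψ ^ 2 := by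
  have h := pow_lt_one₀ (sin_mem_Ioo hα).1.le (sin_mem_Ioo hα).2 two_ne_zero
  nlinarith [Real.sin_sq_le_one ψ, sq_nonneg (Real.sin ψ), sq_nonneg (Real.sin α)]

lemma hasDerivAt_arcsin_sin_mul_sin (hα : α ∈ Ioo 0 (π / 2)) (ψ : ℝ) :
    HasDerivAt (fun ψ => Real.arcsin (Real.sin α * Real.sin ψ))
      (Real.sin α * Real.cos ψ * (√(1 - Real.sin α ^ 2 * Real.sin ψ ^ 2))⁻¹) ψ := by
  have hpos := one_sub_sin_sq_mul_sin_sq_pos hα ψ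
  rw [← mul_pow] at hpos ⊢
  have hlt := abs_lt.1 ((sq_lt_one_iff_abs_lt_one _).1 (sub_pos.1 hpos))
  refine ((Real.hasDerivAt_arcsin hlt.1.ne' hlt.2.ne).comp ψ
    ((Real.hasDerivAt_sin ψ).const_mul (Real.sin α))).congr_deriv ?_
  rw [one_div, mul_comm]

lemma arcKernel_arcsin_sin_mul_sin (hα : α ∈ Ioo 0 (π / 2)) {ψ : ℝ} (hψ : ψ ∈ Ioo 0 (π / 2)) :
    arcKernel α (Real.arcsin (Real.sin α * Real.sin ψ)) = (Real.sin α * Real.cos ψ)⁻¹ := by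
  have hs := sin_mem_Ioo hα
  have hψs := sin_mem_Ioo hψ
  have hc := Real.cos_pos_of_mem_Ioo ⟨by linarith [Real.pi_pos, hψ.1], hψ.2⟩
  rw [arcKernel, Real.sin_arcsin (by nlinarith [hs.1, hψs.1])
    (mul_le_one₀ hs.2.le hψs.1.le hψs.2.le), ← Real.sqrt_sq (mul_pos hs.1 hc).le, mul_pow,
    mul_pow, Real.cos_sq']
  ring_nf

lemma arcsin_deriv_smul_arcKernel (hα : α ∈ Ioo 0 (π / 2)) {ψ : ℝ} (hψ : ψ ∈ Ioo 0 (π / 2)) :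
    (Real.sin α * Real.cos ψ * (√(1 - Real.sin α ^ 2 * Real.sin ψ ^ 2))⁻¹) •
      arcKernel α (Real.arcsin (Real.sin α * Real.sin ψ)) =
      (√(1 - Real.sin α ^ 2 * Real.sin ψ ^ 2))⁻¹ := by
  have hs := (sin_mem_Ioo hα).1
  have hc := Real.cos_pos_of_mem_Ioo ⟨by linarith [Real.pi_pos, hψ.1], hψ.2⟩
  rw [arcKernel_arcsin_sin_mul_sin hα hψ, smul_eq_mul, mul_right_comm,
    mul_inv_cancel₀ (mul_pos hs hc).ne', one_mul]

lemma intervalIntegrable_ellK_integrand (hα : α ∈ Ioo 0 (π / 2)) (a b : ℝ) :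
    IntervalIntegrable (fun ψ => (√(1 - Real.sin α ^ 2 * Real.sin ψ ^ 2))⁻¹) volume a b :=
  Continuous.intervalIntegrable (Continuous.inv₀ (by fun_prop) fun ψ =>
    (Real.sqrt_pos.2 (one_sub_sin_sq_mul_sin_sq_pos hα ψ)).ne') a b

lemma integral_arcKernel_zero_amplitude (hα : α ∈ Ioo 0 (π / 2)) :
    IntervalIntegrable (arcKernel α) volume 0 α ∧
      ∫ φ in (0 : ℝ)..α, arcKernel α φ = ellK (Real.sin α ^ 2) := by
  have hderiv (ψ : ℝ) (_ : ψ ∈ Ioo (min 0 (π / 2)) (max 0 (π / 2))) :=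
    hasDerivAt_arcsin_sin_mul_sin hα ψ
  have hcont : ContinuousOn (fun ψ => Real.arcsin (Real.sin α * Real.sin ψ)) [[0, π / 2]] :=
    Continuous.continuousOn (by fun_prop)
  have hnonneg : ∀ ψ ∈ Ioo (min 0 (π / 2)) (max 0 (π / 2)),
      0 ≤ Real.sin α * Real.cos ψ * (√(1 - Real.sin α ^ 2 * Real.sin ψ ^ 2))⁻¹ := by
    rw [min_eq_left Real.pi_div_two_pos.le, max_eq_right Real.pi_div_two_pos.le]
    intro ψ hψ
    exact mul_nonneg (mul_nonneg (sin_mem_Ioo hα).1.le (Real.cos_nonneg_of_mem_Icc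
      ⟨by linarith [Real.pi_pos, hψ.1], hψ.2.le⟩)) (inv_nonneg.2 (Real.sqrt_nonneg _))
  have hiff := intervalIntegral.integrable_deriv_smul_comp_iff_of_deriv_nonneg hcont hderiv hnonneg
    (g := arcKernel α)
  have heq := intervalIntegral.integral_deriv_smul_comp_of_deriv_nonneg hcont hderiv hnonneg
    (g := arcKernel α)
  simp only [Function.comp_apply, Real.sin_zero, mul_zero, Real.arcsin_zero, Real.sin_pi_div_two,
    mul_one, Real.arcsin_sin (by linarith [Real.pi_pos, hα.1] : -(π / 2) ≤ α) hα.2.le] at hiff heq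
  rw [intervalIntegral.integral_congr_Ioo_of_le Real.pi_div_two_pos.le
    fun ψ hψ => arcsin_deriv_smul_arcKernel hα hψ] at heq
  refine ⟨hiff.1 ((intervalIntegrable_ellK_integrand hα _ _).congr_uIoo fun ψ hψ => ?_), heq.symm⟩
  rw [uIoo_of_le Real.pi_div_two_pos.le] at hψ
  exact (arcsin_deriv_smul_arcKernel hα hψ).symm

lemma eqOn_arcKernel_zero (hα : α ∈ Ioo 0 (π / 2)) : EqOn (arcKernel α) 0 (uIoo α (π / 2)) := by
  rw [uIoo_of_le hα.2.le]
  exact fun φ hφ => arcKernel_eq_zero hα.1.le hφ.1.le hφ.2.le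

lemma intervalIntegrable_arcKernel (hα : α ∈ Ioo 0 (π / 2)) :
    IntervalIntegrable (arcKernel α) volume 0 (π / 2) :=
  (integral_arcKernel_zero_amplitude hα).1.trans
    (intervalIntegrable_const.congr_uIoo (eqOn_arcKernel_zero hα).symm)

lemma integral_arcKernel (hα : α ∈ Ioo 0 (π / 2)) :
    ∫ φ in (0 : ℝ)..π / 2, arcKernel α φ = ellK (Real.sin α ^ 2) := by
  obtain ⟨hint, heq⟩ := integral_arcKernel_zero_amplitude hα
  rw [← intervalIntegral.integral_add_adjacent_intervals hint
    (intervalIntegrable_const.congr_uIoo (eqOn_arcKernel_zero hα).symm), heq,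
    intervalIntegral.integral_congr_uIoo (eqOn_arcKernel_zero hα)]
  exact add_eq_left.2 intervalIntegral.integral_zero

end Amplitude

/-! ### Boundary values on the unit circle -/

lemma invSqrt_of_one_sub_eq_circleMap {z : ℂ} {R θ : ℝ} (hR : 0 ≤ R) (hθ : θ ∈ Ioc (-π) π)
    (hz : 1 - z = circleMap 0 R θ) : invSqrt z = circleMap 0 (√R)⁻¹ (-(θ / 2)) := by
  have hcpow := Complex.cpow_ofReal (1 - z) (-(1 / 2))
  rw [invSqrt, ← Complex.ofReal_neg, hcpow, hz, norm_circleMap_zero, abs_of_nonneg hR,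
    Real.rpow_neg hR, ← Real.sqrt_eq_rpow, circleMap_zero, Complex.exp_mul_I]
  rcases hR.eq_or_lt with rfl | hR
  · simp only [Real.sqrt_zero, inv_zero, Complex.ofReal_zero, zero_mul, circleMap_zero]
  · rw [circleMap_zero, Complex.exp_mul_I, Complex.arg_mul_cos_add_sin_mul_I hR hθ]
    push_cast
    ring_nf

lemma one_sub_circleMap_one (ψ : ℝ) :
    1 - circleMap 0 1 (2 * ψ) = circleMap 0 (2 * Real.sin ψ) (ψ - π / 2) := by
  apply Complex.ext
  · rw [Complex.sub_re, circleMap_zero_re, circleMap_zero_re, Complex.one_re,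
      Real.cos_sub_pi_div_two, Real.cos_two_mul_eq_one_sub]
    ring
  · rw [Complex.sub_im, circleMap_zero_im, circleMap_zero_im, Complex.one_im,
      Real.sin_sub_pi_div_two, Real.sin_two_mul]
    ring

lemma invSqrt_circleMap_one {ψ : ℝ} (hψ : ψ ∈ Icc 0 π) :
    invSqrt (circleMap 0 1 (2 * ψ)) = circleMap 0 (√(2 * Real.sin ψ))⁻¹ (π / 4 - ψ / 2) := by
  rw [invSqrt_of_one_sub_eq_circleMap
    (mul_nonneg zero_le_two (Real.sin_nonneg_of_nonneg_of_le_pi hψ.1 hψ.2))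
    ⟨by linarith [Real.pi_pos, hψ.1], by linarith [Real.pi_pos, hψ.2]⟩ (one_sub_circleMap_one ψ)]
  ring_nf

lemma invSqrt_circleMap_one_neg {ψ : ℝ} (hψ : ψ ∈ Icc 0 π) :
    invSqrt (circleMap 0 1 (2 * -ψ)) = circleMap 0 (√(2 * Real.sin ψ))⁻¹ (ψ / 2 - π / 4) := by
  have hone := congrArg (starRingEnd ℂ) (one_sub_circleMap_one ψ)
  rw [map_sub, map_one, conj_circleMap_zero, conj_circleMap_zero, ← mul_neg] at hone
  rw [invSqrt_of_one_sub_eq_circleMap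
    (mul_nonneg zero_le_two (Real.sin_nonneg_of_nonneg_of_le_pi hψ.1 hψ.2))
    ⟨by linarith [Real.pi_pos, hψ.2], by linarith [Real.pi_pos, hψ.1]⟩ hone]
  ring_nf

lemma one_sub_circleMap_one_mem_slitPlane {ψ : ℝ} (hψ : Real.sin ψ ≠ 0) :
    1 - circleMap 0 1 (2 * ψ) ∈ Complex.slitPlane := by
  refine Or.inl ?_
  rw [Complex.sub_re, circleMap_zero_re, Complex.one_re, Real.cos_two_mul_eq_one_sub]
  have hpos := pow_pos (abs_pos.2 hψ) 2
  rw [sq_abs] at hpos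
  linarith

lemma abs_sin_le_norm_one_sub_circleMap {ρ : ℝ} (h0 : 0 ≤ ρ) (ψ : ℝ) :
    |Real.sin ψ| ≤ ‖1 - circleMap 0 ρ (2 * ψ)‖ := by
  rw [Complex.norm_eq_sqrt_sq_add_sq, Complex.sub_re, Complex.sub_im, circleMap_zero_re,
    circleMap_zero_im, Complex.one_re, Complex.one_im]
  refine Real.abs_le_sqrt ?_
  have hsq := Real.sin_sq_add_cos_sq (2 * ψ)
  have hcos := Real.cos_two_mul_eq_one_sub ψ
  have hle := Real.sin_sq_le_one ψ
  nlinarith [mul_nonneg (sub_nonneg.2 hle) (sq_nonneg (1 - ρ)),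
    mul_nonneg (sq_nonneg (Real.sin ψ)) (by positivity : 0 ≤ ρ ^ 2 + 2 * ρ)]

lemma norm_invSqrt_circleMap_le {ρ : ℝ} (h0 : 0 ≤ ρ) {ψ : ℝ} (hψ : Real.sin ψ ≠ 0) :
    ‖invSqrt (circleMap 0 ρ (2 * ψ))‖ ≤ (√|Real.sin ψ|)⁻¹ := by
  rw [norm_invSqrt]
  exact inv_anti₀ (Real.sqrt_pos.2 (abs_pos.2 hψ))
    (Real.sqrt_le_sqrt (abs_sin_le_norm_one_sub_circleMap h0 ψ))

lemma tendsto_invSqrt_circleMap {ψ : ℝ} (hψ : Real.sin ψ ≠ 0) :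
    Tendsto (fun ρ => invSqrt (circleMap 0 ρ (2 * ψ))) (𝓝 1)
      (𝓝 (invSqrt (circleMap 0 1 (2 * ψ)))) := by
  have hcont : ContinuousAt invSqrt (circleMap 0 1 (2 * ψ)) :=
    (continuousAt_const.sub continuousAt_id).cpow continuousAt_const
      (one_sub_circleMap_one_mem_slitPlane hψ)
  have hcircle : Continuous fun ρ : ℝ => circleMap 0 ρ (2 * ψ) := by
    unfold circleMap
    fun_prop
  exact hcont.tendsto.comp (hcircle.tendsto 1)

lemma sin_add_mul_sin_sub (α φ : ℝ) :
    Real.sin (α + φ) * Real.sin (α - φ) = Real.sin α ^ 2 - Real.sin φ ^ 2 := by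
  rw [Real.sin_add, Real.sin_sub]
  linear_combination Real.sin α ^ 2 * Real.cos_sq' φ - Real.sin φ ^ 2 * Real.cos_sq' α

section BoundaryKernel

variable {α φ : ℝ}

lemma add_mem_Ioo_zero_pi (hα : α ∈ Ioo 0 (π / 2)) (hφ : φ ∈ Ioo 0 (π / 2)) : α + φ ∈ Ioo 0 π :=
  ⟨add_pos hα.1 hφ.1, by linarith [hα.2, hφ.2]⟩

lemma sin_sub_ne_zero (hα : α ∈ Ioo 0 (π / 2)) (hφ : φ ∈ Ioo 0 (π / 2)) (hne : φ ≠ α) :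
    Real.sin (α - φ) ≠ 0 := by
  rw [Ne, Real.sin_eq_zero_iff_of_lt_of_lt (by linarith [hα.1, hφ.2, Real.pi_pos])
    (by linarith [hφ.1, hα.2, Real.pi_pos]), sub_eq_zero]
  exact hne.symm

lemma norm_agmKernel_le (hα : α ∈ Ioo 0 (π / 2)) (hφ : φ ∈ Ioo 0 (π / 2)) (hne : φ ≠ α)
    {ρ : ℝ} (h0 : 0 ≤ ρ) :
    ‖agmKernel ρ α φ‖ ≤ arcKernel α φ + arcKernel (π / 2 - α) (π / 2 - φ) := by
  have hadd := add_mem_Ioo_zero_pi hα hφ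
  calc ‖agmKernel ρ α φ‖ ≤ (√|Real.sin (α + φ)|)⁻¹ * (√|Real.sin (α - φ)|)⁻¹ := by
        rw [agmKernel, norm_mul]
        exact mul_le_mul (norm_invSqrt_circleMap_le h0 (Real.sin_pos_of_mem_Ioo hadd).ne')
          (norm_invSqrt_circleMap_le h0 (sin_sub_ne_zero hα hφ hne)) (norm_nonneg _)
          (inv_nonneg.2 (Real.sqrt_nonneg _))
    _ = (√|Real.sin α ^ 2 - Real.sin φ ^ 2|)⁻¹ := by
        rw [← mul_inv, ← Real.sqrt_mul (abs_nonneg _), ← abs_mul, sin_add_mul_sin_sub]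
    _ ≤ arcKernel α φ + arcKernel (π / 2 - α) (π / 2 - φ) := by
        rcases abs_choice (Real.sin α ^ 2 - Real.sin φ ^ 2) with h | h <;> rw [h]
        · exact le_add_of_nonneg_right (arcKernel_nonneg _ _)
        · rw [neg_sub, ← arcKernel_pi_div_two_sub]
          exact le_add_of_nonneg_left (arcKernel_nonneg _ _)

lemma inv_sqrt_two_mul_mul_inv_sqrt_two_mul {a : ℝ} (ha : 0 ≤ a) (b : ℝ) :
    (√(2 * a))⁻¹ * (√(2 * b))⁻¹ = 1 / 2 * (√(a * b))⁻¹ := by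
  rw [← mul_inv, ← Real.sqrt_mul (mul_nonneg zero_le_two ha),
    show 2 * a * (2 * b) = 2 ^ 2 * (a * b) by ring, Real.sqrt_mul (sq_nonneg _),
    Real.sqrt_sq zero_le_two, mul_inv, one_div]

lemma agmKernel_one_of_le (hα : α ∈ Ioo 0 (π / 2)) (hφ : φ ∈ Ioo 0 (π / 2)) (hle : φ ≤ α) :
    agmKernel 1 α φ = circleMap 0 (1 / 2) (-α) * (Complex.I * arcKernel α φ) := by
  have hadd := Ioo_subset_Icc_self (add_mem_Ioo_zero_pi hα hφ)
  have hsub : α - φ ∈ Icc 0 π := ⟨sub_nonneg.2 hle, by linarith [hφ.1, hα.2, Real.pi_pos]⟩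
  have hI : Complex.I = circleMap 0 1 (π / 2) := by simp [circleMap, Complex.exp_pi_div_two_mul_I]
  have harc : (arcKernel α φ : ℂ) = circleMap 0 (arcKernel α φ) 0 := by simp [circleMap]
  rw [agmKernel, invSqrt_circleMap_one hadd, invSqrt_circleMap_one hsub, hI, harc,
    circleMap_zero_mul, circleMap_zero_mul, circleMap_zero_mul,
    inv_sqrt_two_mul_mul_inv_sqrt_two_mul (Real.sin_nonneg_of_mem_Icc hadd), sin_add_mul_sin_sub,
    ← arcKernel]
  ring_nf

lemma agmKernel_one_of_ge (hα : α ∈ Ioo 0 (π / 2)) (hφ : φ ∈ Ioo 0 (π / 2)) (hle : α ≤ φ) :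
    agmKernel 1 α φ = circleMap 0 (1 / 2) (-α) * arcKernel (π / 2 - α) (π / 2 - φ) := by
  have hadd := Ioo_subset_Icc_self (add_mem_Ioo_zero_pi hφ hα)
  have hsub : φ - α ∈ Icc 0 π := ⟨sub_nonneg.2 hle, by linarith [hα.1, hφ.2, Real.pi_pos]⟩
  have harc (x : ℝ) : (x : ℂ) = circleMap 0 x 0 := by simp [circleMap]
  rw [agmKernel, ← neg_sub φ α, add_comm α φ, invSqrt_circleMap_one hadd,
    invSqrt_circleMap_one_neg hsub, harc, circleMap_zero_mul, circleMap_zero_mul,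
    inv_sqrt_two_mul_mul_inv_sqrt_two_mul (Real.sin_nonneg_of_mem_Icc hadd), sin_add_mul_sin_sub,
    ← arcKernel_pi_div_two_sub]
  ring_nf

lemma agmKernel_one (hα : α ∈ Ioo 0 (π / 2)) (hφ : φ ∈ Ioo 0 (π / 2)) :
    agmKernel 1 α φ = circleMap 0 (1 / 2) (-α) *
      (arcKernel (π / 2 - α) (π / 2 - φ) + Complex.I * arcKernel α φ) := by
  rcases le_total φ α with h | h
  · rw [agmKernel_one_of_le hα hφ h, arcKernel_eq_zero (sub_nonneg.2 hα.2.le)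
      (sub_le_sub_left h _) (sub_le_self _ hφ.1.le), Complex.ofReal_zero, zero_add]
  · rw [agmKernel_one_of_ge hα hφ h, arcKernel_eq_zero hα.1.le h hφ.2.le, Complex.ofReal_zero,
      mul_zero, add_zero]

end BoundaryKernel

lemma intervalIntegrable_comp_pi_div_two_sub {E : Type*} [NormedAddCommGroup E] {f : ℝ → E}
    (hf : IntervalIntegrable f volume 0 (π / 2)) :
    IntervalIntegrable (fun x => f (π / 2 - x)) volume 0 (π / 2) := by
  simpa only [sub_zero, sub_self] using (hf.comp_sub_left (π / 2)).symm

lemma intervalIntegrable_coe {f : ℝ → ℝ} {a b : ℝ} (hf : IntervalIntegrable f volume a b) :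
    IntervalIntegrable (fun x => (f x : ℂ)) volume a b :=
  ⟨hf.1.ofReal, hf.2.ofReal⟩

lemma sqrt_lt_one {x : ℝ} (hx : x < 1) : √x < 1 := by
  rwa [Real.sqrt_lt' one_pos, one_pow]

section BoundaryValue

variable {α : ℝ}

lemma pi_div_two_sub_mem_Ioo (hα : α ∈ Ioo 0 (π / 2)) : π / 2 - α ∈ Ioo 0 (π / 2) :=
  ⟨sub_pos.2 hα.2, sub_lt_self _ hα.1⟩

lemma intervalIntegrable_arcKernel_reflect (hα : α ∈ Ioo 0 (π / 2)) :
    IntervalIntegrable (fun φ => arcKernel (π / 2 - α) (π / 2 - φ)) volume 0 (π / 2) :=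
  intervalIntegrable_comp_pi_div_two_sub (intervalIntegrable_arcKernel (pi_div_two_sub_mem_Ioo hα))

lemma integral_arcKernel_reflect (hα : α ∈ Ioo 0 (π / 2)) :
    ∫ φ in (0 : ℝ)..π / 2, arcKernel (π / 2 - α) (π / 2 - φ) = ellK (Real.cos α ^ 2) := by
  rw [integral_comp_pi_div_two_sub, integral_arcKernel (pi_div_two_sub_mem_Ioo hα),
    Real.sin_pi_div_two_sub]

lemma integral_agmKernel_one (hα : α ∈ Ioo 0 (π / 2)) :
    ∫ φ in (0 : ℝ)..π / 2, agmKernel 1 α φ = circleMap 0 (1 / 2) (-α) *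
      (ellK (Real.cos α ^ 2) + Complex.I * ellK (Real.sin α ^ 2)) := by
  rw [intervalIntegral.integral_congr_Ioo_of_le Real.pi_div_two_pos.le
      fun φ hφ => agmKernel_one hα hφ, intervalIntegral.integral_const_mul,
    intervalIntegral.integral_add (intervalIntegrable_coe (intervalIntegrable_arcKernel_reflect hα))
      ((intervalIntegrable_coe (intervalIntegrable_arcKernel hα)).const_mul _),
    intervalIntegral.integral_const_mul, intervalIntegral.integral_ofReal,
    intervalIntegral.integral_ofReal, integral_arcKernel hα, integral_arcKernel_reflect hα]

lemma ae_norm_agmKernel_le (hα : α ∈ Ioo 0 (π / 2)) {ρ : ℝ} (h0 : 0 ≤ ρ) :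
    ∀ᵐ φ, φ ∈ Ι 0 (π / 2) →
      ‖agmKernel ρ α φ‖ ≤ arcKernel α φ + arcKernel (π / 2 - α) (π / 2 - φ) := by
  filter_upwards [ae_mem_Ioo_of_mem_uIoc Real.pi_div_two_pos.le, Measure.ae_ne volume α]
    with φ hφ hne hmem
  exact norm_agmKernel_le hα (hφ hmem) hne h0

lemma tendsto_integral_agmKernel (hα : α ∈ Ioo 0 (π / 2)) :
    Tendsto (fun ρ => ∫ φ in (0 : ℝ)..π / 2, agmKernel ρ α φ) (𝓝[<] 1)
      (𝓝 (∫ φ in (0 : ℝ)..π / 2, agmKernel 1 α φ)) := by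
  have hlt : ∀ᶠ ρ : ℝ in 𝓝[<] 1, ρ ∈ Ioo (0 : ℝ) 1 := Ioo_mem_nhdsLT zero_lt_one
  refine intervalIntegral.tendsto_integral_filter_of_dominated_convergence
    (fun φ => arcKernel α φ + arcKernel (π / 2 - α) (π / 2 - φ))
    (hlt.mono fun ρ hρ => (continuous_agmKernel hρ.1.le hρ.2 α).aestronglyMeasurable)
    (hlt.mono fun ρ hρ => ae_norm_agmKernel_le hα hρ.1.le)
    ((intervalIntegrable_arcKernel hα).add (intervalIntegrable_arcKernel_reflect hα)) ?_
  filter_upwards [ae_mem_Ioo_of_mem_uIoc Real.pi_div_two_pos.le, Measure.ae_ne volume α]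
    with φ hφ hne hmem
  have hadd := (Real.sin_pos_of_mem_Ioo (add_mem_Ioo_zero_pi hα (hφ hmem))).ne'
  exact ((tendsto_invSqrt_circleMap hadd).mul
    (tendsto_invSqrt_circleMap (sin_sub_ne_zero hα (hφ hmem) hne))).mono_left nhdsWithin_le_nhds

lemma norm_integral_agmKernel_le (hα : α ∈ Ioo 0 (π / 2)) {ρ : ℝ} (h0 : 0 ≤ ρ) :
    ‖∫ φ in (0 : ℝ)..π / 2, agmKernel ρ α φ‖ ≤
      ellK (Real.sin α ^ 2) + ellK (Real.cos α ^ 2) := by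
  have hint := intervalIntegrable_arcKernel hα
  have hint' := intervalIntegrable_arcKernel_reflect hα
  rw [← integral_arcKernel hα, ← integral_arcKernel_reflect hα,
    ← intervalIntegral.integral_add hint hint']
  exact intervalIntegral.norm_integral_le_of_norm_le Real.pi_div_two_pos.le
    (by simpa only [uIoc_of_le Real.pi_div_two_pos.le] using ae_norm_agmKernel_le hα h0)
    (hint.add hint')

lemma gaussK_circleMap_sqrt {ρ : ℝ} (hρ : ρ ∈ Ioo (0 : ℝ) 1) :
    gaussK (circleMap 0 ρ (4 * α)) = 2 / π * ∫ φ in (0 : ℝ)..π / 2, agmKernel √ρ α φ := by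
  rw [← gaussK_circleMap (Real.sqrt_nonneg ρ) (sqrt_lt_one hρ.2), Real.sq_sqrt hρ.1.le]

lemma tendsto_sqrt_nhdsLT_one : Tendsto Real.sqrt (𝓝[<] 1) (𝓝[<] 1) := by
  refine tendsto_nhdsWithin_iff.2 ⟨?_, ?_⟩
  · simpa only [Real.sqrt_one] using
      (Real.continuous_sqrt.tendsto 1).mono_left nhdsWithin_le_nhds
  · filter_upwards [self_mem_nhdsWithin] with ρ hρ
    exact sqrt_lt_one hρ

/-- The radial limit of `eulerKernel` at the point `exp (4 * I * α)` of the unit circle. -/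
noncomputable def eulerBoundary (α : ℝ) : ℂ :=
  circleMap 0 (√2 * π)⁻¹ (π / 4 - 2 * α) * (ellWeight (π / 2 - α) + Complex.I * ellWeight α)

lemma ellWeight_pi_div_two_sub (α : ℝ) :
    ellWeight (π / 2 - α) = ellK (Real.cos α ^ 2) * (√(Real.sin (2 * α)))⁻¹ := by
  rw [ellWeight, Real.sin_pi_div_two_sub, mul_sub, mul_div_cancel₀ π two_ne_zero, Real.sin_pi_sub]

lemma two_mul_mem_Ioo_zero_pi (hα : α ∈ Ioo 0 (π / 2)) : 2 * α ∈ Ioo 0 π :=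
  ⟨mul_pos two_pos hα.1, by linarith [hα.2]⟩

lemma eulerBoundary_eq (hα : α ∈ Ioo 0 (π / 2)) :
    eulerBoundary α = invSqrt (circleMap 0 1 (2 * (2 * α))) *
      (2 / π * ∫ φ in (0 : ℝ)..π / 2, agmKernel 1 α φ) := by
  have hphase : circleMap 0 1 (π / 4 - 2 * α / 2) * circleMap 0 1 (-α) =
      circleMap 0 1 (π / 4 - 2 * α) := by
    rw [circleMap_zero_mul]
    ring_nf
  have hradius (R θ : ℝ) : circleMap 0 R θ = R * circleMap 0 1 θ := by
    simp only [circleMap_zero, Complex.ofReal_one, one_mul]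
  rw [invSqrt_circleMap_one (Ioo_subset_Icc_self (two_mul_mem_Ioo_zero_pi hα)),
    integral_agmKernel_one hα, eulerBoundary, ellWeight_pi_div_two_sub, ellWeight,
    Real.sqrt_mul zero_le_two, hradius, hradius (1 / 2), hradius (_)⁻¹, ← hphase]
  push_cast
  ring

lemma tendsto_eulerKernel_circleMap (hα : α ∈ Ioo 0 (π / 2)) :
    Tendsto (fun ρ => eulerKernel (circleMap 0 ρ (4 * α))) (𝓝[<] 1) (𝓝 (eulerBoundary α)) := by
  have hsin := (Real.sin_pos_of_mem_Ioo (two_mul_mem_Ioo_zero_pi hα)).ne'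
  rw [eulerBoundary_eq hα]
  refine (((tendsto_invSqrt_circleMap hsin).mono_left nhdsWithin_le_nhds).mul
    (((tendsto_integral_agmKernel hα).comp tendsto_sqrt_nhdsLT_one).const_mul (2 / π : ℂ))).congr'
    ?_
  filter_upwards [Ioo_mem_nhdsLT (zero_lt_one (α := ℝ))] with ρ hρ
  rw [eulerKernel, gaussK_circleMap_sqrt hρ, ← mul_assoc 2 2 α]
  norm_num

lemma norm_eulerKernel_circleMap_le (hα : α ∈ Ioo 0 (π / 2)) {ρ : ℝ} (hρ : ρ ∈ Ioo (0 : ℝ) 1) :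
    ‖eulerKernel (circleMap 0 ρ (4 * α))‖ ≤ 2 / π * (ellWeight α + ellWeight (π / 2 - α)) := by
  have hsin := Real.sin_pos_of_mem_Ioo (two_mul_mem_Ioo_zero_pi hα)
  calc ‖eulerKernel (circleMap 0 ρ (4 * α))‖
      = ‖invSqrt (circleMap 0 ρ (2 * (2 * α)))‖ *
        (2 / π * ‖∫ φ in (0 : ℝ)..π / 2, agmKernel √ρ α φ‖) := by
        rw [eulerKernel, gaussK_circleMap_sqrt hρ, norm_mul, norm_mul, norm_div,
          Complex.norm_ofNat, Complex.norm_real, Real.norm_of_nonneg Real.pi_pos.le, ← mul_assoc 2]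
        norm_num
    _ ≤ (√|Real.sin (2 * α)|)⁻¹ *
        (2 / π * (ellK (Real.sin α ^ 2) + ellK (Real.cos α ^ 2))) := by
        gcongr
        · exact norm_invSqrt_circleMap_le hρ.1.le hsin.ne'
        · exact norm_integral_agmKernel_le hα (Real.sqrt_nonneg ρ)
    _ = 2 / π * (ellWeight α + ellWeight (π / 2 - α)) := by
        rw [ellWeight_pi_div_two_sub, ellWeight, abs_of_pos hsin]
        ring

end BoundaryValue

/-! ### The keyhole contour -/

section Keyhole

variable {f : ℂ → ℂ} {r ε ρ : ℝ}

/-- The integral of `z ^ r * f z` over the angle along the circle of radius `ρ`, with the branch of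
`z ^ r` continued from the positive real axis. -/
noncomputable def circleMoment (r : ℝ) (f : ℂ → ℂ) (ρ : ℝ) : ℂ :=
  ∫ θ in (0 : ℝ)..2 * π, circleMap 0 (ρ ^ r) (r * θ) * f (circleMap 0 ρ θ)

lemma exp_mul_log_add_mul_I (hρ : 0 < ρ) (r θ : ℝ) :
    Complex.exp (r * (Real.log ρ + θ * Complex.I)) = circleMap 0 (ρ ^ r) (r * θ) := by
  rw [mul_add, Complex.exp_add, ← Complex.ofReal_mul, ← Complex.ofReal_exp, mul_comm r,
    ← Real.rpow_def_of_pos hρ, circleMap_zero]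
  push_cast
  ring_nf

lemma exp_log_add_mul_I (hρ : 0 < ρ) (θ : ℝ) :
    Complex.exp (Real.log ρ + θ * Complex.I) = circleMap 0 ρ θ := by
  simpa only [Complex.ofReal_one, one_mul, Real.rpow_one] using exp_mul_log_add_mul_I hρ 1 θ

lemma integral_exp_mul_comp_exp (hε : 0 < ε) (hρ : 0 < ρ) (r : ℝ) (f : ℂ → ℂ) :
    ∫ x in Real.log ε..Real.log ρ, Complex.exp ((r : ℂ) * x) * f (Complex.exp x) =
      ∫ x in ε..ρ, ((x ^ (r - 1) : ℝ) : ℂ) * f x := by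
  have h := intervalIntegral.integral_deriv_smul_comp_of_deriv_nonneg
    (g := fun x : ℝ => ((x ^ (r - 1) : ℝ) : ℂ) * f x) Real.continuous_exp.continuousOn
    (fun x _ => Real.hasDerivAt_exp x) (fun x _ => (Real.exp_pos x).le)
    (a := Real.log ε) (b := Real.log ρ)
  rw [Real.exp_log hε, Real.exp_log hρ] at h
  rw [← h]
  congr 1 with x
  rw [Function.comp_apply, ← Real.exp_mul, Complex.real_smul]
  push_cast
  rw [← mul_assoc, ← Complex.exp_add]
  ring_nf

lemma keyhole_annulus (hf : DifferentiableOn ℂ f (Metric.ball 0 1)) (r : ℝ)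
    (hε : ε ∈ Ioo (0 : ℝ) 1) (hρ : ρ ∈ Ioo (0 : ℝ) 1) :
    (circleMap 0 1 (r * (2 * π)) - 1) * ∫ x in ε..ρ, ((x ^ (r - 1) : ℝ) : ℂ) * f x =
      Complex.I * (circleMoment r f ρ - circleMoment r f ε) := by
  have hdiff : DifferentiableOn ℂ (fun w => Complex.exp (r * w) * f (Complex.exp w))
      ([[Real.log ε, Real.log ρ]] ×ℂ [[0, 2 * π]]) := by
    have hexp : DifferentiableOn ℂ (fun w : ℂ => Complex.exp (r * w))
        ([[Real.log ε, Real.log ρ]] ×ℂ [[0, 2 * π]]) := by fun_prop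
    refine hexp.mul (hf.comp Complex.differentiable_exp.differentiableOn fun w hw => ?_)
    rw [mem_ball_zero_iff, Complex.norm_exp, Real.exp_lt_one_iff]
    exact hw.1.2.trans_lt (max_lt (Real.log_neg hε.1 hε.2) (Real.log_neg hρ.1 hρ.2))
  have hrect := Complex.integral_boundary_rect_eq_zero_of_differentiableOn
    (fun w => Complex.exp (r * w) * f (Complex.exp w)) (Real.log ε)
    (Real.log ρ + (2 * π : ℝ) * Complex.I) (by simpa using hdiff)
  have htop (x : ℝ) : Complex.exp (r * (x + (2 * π : ℝ) * Complex.I)) *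
      f (Complex.exp (x + (2 * π : ℝ) * Complex.I)) =
      circleMap 0 1 (r * (2 * π)) * (Complex.exp (r * x) * f (Complex.exp x)) := by
    rw [mul_add, Complex.exp_add, Complex.exp_add, Complex.ofReal_mul, Complex.ofReal_ofNat,
      Complex.exp_two_pi_mul_I, mul_one, circleMap_zero]
    push_cast
    ring_nf
  simp only [Complex.add_re, Complex.add_im, Complex.ofReal_re, Complex.ofReal_im,
    Complex.re_ofReal_mul, Complex.im_ofReal_mul, Complex.I_re, Complex.I_im, mul_zero, mul_one,
    add_zero, zero_add, Complex.ofReal_zero, zero_mul, htop, exp_mul_log_add_mul_I hε.1,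
    exp_mul_log_add_mul_I hρ.1, exp_log_add_mul_I hε.1, exp_log_add_mul_I hρ.1,
    intervalIntegral.integral_const_mul, integral_exp_mul_comp_exp hε.1 hρ.1, smul_eq_mul] at hrect
  rw [circleMoment, circleMoment]
  linear_combination -hrect

lemma tendsto_circleMoment_zero (hf : ContinuousAt f 0) (hr : 0 < r) :
    Tendsto (circleMoment r f) (𝓝[>] 0) (𝓝 0) := by
  obtain ⟨δ, hδ, hball⟩ := Metric.continuousAt_iff.1 hf 1 one_pos
  have hpow : Tendsto (fun ρ : ℝ => ρ ^ r * (‖f 0‖ + 1) * |2 * π - 0|) (𝓝[>] 0) (𝓝 0) := by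
    have h := ((Real.continuousAt_rpow_const 0 r (Or.inr hr.le)).tendsto.mul_const
      (‖f 0‖ + 1)).mul_const |2 * π - 0|
    rw [Real.zero_rpow hr.ne', zero_mul, zero_mul] at h
    exact h.mono_left nhdsWithin_le_nhds
  refine squeeze_zero_norm' ?_ hpow
  filter_upwards [Ioo_mem_nhdsGT hδ] with ρ hρ
  refine intervalIntegral.norm_integral_le_of_norm_le_const fun θ _ => ?_
  have hnorm : ‖circleMap 0 ρ θ‖ = ρ := by rw [norm_circleMap_zero, abs_of_pos hρ.1]
  have hdist := hball (x := circleMap 0 ρ θ) (by rw [dist_zero_right, hnorm]; exact hρ.2)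
  rw [norm_mul, norm_circleMap_zero, abs_of_nonneg (Real.rpow_nonneg hρ.1.le r)]
  refine mul_le_mul_of_nonneg_left ?_ (Real.rpow_nonneg hρ.1.le r)
  rw [dist_eq_norm] at hdist
  linarith [norm_le_norm_add_norm_sub' (f (circleMap 0 ρ θ)) (f 0)]

lemma tendsto_circleMoment_one {g : ℝ → ℂ} {bound : ℝ → ℝ}
    (hf : ContinuousOn f (Metric.ball 0 1)) (hr : 0 ≤ r)
    (hbound : ∀ ρ ∈ Ioo (0 : ℝ) 1, ∀ᵐ θ, θ ∈ Ι 0 (2 * π) → ‖f (circleMap 0 ρ θ)‖ ≤ bound θ)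
    (hint : IntervalIntegrable bound volume 0 (2 * π))
    (hlim : ∀ᵐ θ, θ ∈ Ι 0 (2 * π) →
      Tendsto (fun ρ => f (circleMap 0 ρ θ)) (𝓝[<] 1) (𝓝 (g θ))) :
    Tendsto (circleMoment r f) (𝓝[<] 1)
      (𝓝 (∫ θ in (0 : ℝ)..2 * π, circleMap 0 1 (r * θ) * g θ)) := by
  have hlt : ∀ᶠ ρ : ℝ in 𝓝[<] 1, ρ ∈ Ioo (0 : ℝ) 1 := Ioo_mem_nhdsLT zero_lt_one
  refine intervalIntegral.tendsto_integral_filter_of_dominated_convergence bound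
    (hlt.mono fun ρ hρ => Continuous.aestronglyMeasurable ?_) (hlt.mono fun ρ hρ => ?_) hint ?_
  · exact ((continuous_circleMap 0 _).comp (continuous_const.mul continuous_id)).mul
      (hf.comp_continuous (continuous_circleMap 0 ρ) fun θ =>
        mem_ball_zero_iff.2 (norm_circleMap_zero_lt hρ.1.le hρ.2 θ))
  · filter_upwards [hbound ρ hρ] with θ hθ hmem
    rw [norm_mul, norm_circleMap_zero, abs_of_nonneg (Real.rpow_nonneg hρ.1.le r)]
    exact (mul_le_of_le_one_left (norm_nonneg _) (Real.rpow_le_one hρ.1.le hρ.2.le hr)).trans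
      (hθ hmem)
  · filter_upwards [hlim] with θ hθ hmem
    refine Tendsto.mul ?_ (hθ hmem)
    have hcont : ContinuousAt (fun ρ : ℝ => circleMap 0 (ρ ^ r) (r * θ)) 1 := by
      unfold circleMap
      exact continuousAt_const.add ((Complex.continuous_ofReal.continuousAt.comp
        (Real.continuousAt_rpow_const 1 r (Or.inr hr))).mul continuousAt_const)
    simpa only [Real.one_rpow] using hcont.tendsto.mono_left nhdsWithin_le_nhds

lemma keyhole_disc {g : ℝ → ℂ} {bound : ℝ → ℝ}
    (hf : DifferentiableOn ℂ f (Metric.ball 0 1)) (hr : 0 < r)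
    (hseg : IntervalIntegrable (fun x : ℝ => ((x ^ (r - 1) : ℝ) : ℂ) * f x) volume 0 1)
    (hbound : ∀ ρ ∈ Ioo (0 : ℝ) 1, ∀ᵐ θ, θ ∈ Ι 0 (2 * π) → ‖f (circleMap 0 ρ θ)‖ ≤ bound θ)
    (hint : IntervalIntegrable bound volume 0 (2 * π))
    (hlim : ∀ᵐ θ, θ ∈ Ι 0 (2 * π) →
      Tendsto (fun ρ => f (circleMap 0 ρ θ)) (𝓝[<] 1) (𝓝 (g θ))) :
    (circleMap 0 1 (r * (2 * π)) - 1) * ∫ x in (0 : ℝ)..1, ((x ^ (r - 1) : ℝ) : ℂ) * f x =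
      Complex.I * ∫ θ in (0 : ℝ)..2 * π, circleMap 0 1 (r * θ) * g θ := by
  set h : ℝ → ℂ := fun x => ((x ^ (r - 1) : ℝ) : ℂ) * f x
  set C := circleMap 0 1 (r * (2 * π)) - 1
  have hprim : ContinuousOn (fun ρ => C * ∫ x in (0 : ℝ)..ρ, h x) (Icc 0 1) := by
    rw [← uIcc_of_le zero_le_one]
    exact continuousOn_const.mul
      (intervalIntegral.continuousOn_primitive_interval' hseg left_mem_uIcc)
  have hsub {ρ : ℝ} (hρ : ρ ∈ Ioo (0 : ℝ) 1) : IntervalIntegrable h volume 0 ρ :=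
    hseg.mono_set (uIcc_subset_uIcc left_mem_uIcc (Icc_subset_uIcc (Ioo_subset_Icc_self hρ)))
  have hconst : ∀ ρ ∈ Ioo (0 : ℝ) 1,
      (C * ∫ x in (0 : ℝ)..ρ, h x) - Complex.I * circleMoment r f ρ =
        (C * ∫ x in (0 : ℝ)..1 / 2, h x) - Complex.I * circleMoment r f (1 / 2) := by
    intro ρ hρ
    have hhalf : (1 / 2 : ℝ) ∈ Ioo (0 : ℝ) 1 := by norm_num
    have hannulus := keyhole_annulus hf r hhalf hρ
    rw [← intervalIntegral.integral_interval_sub_left (hsub hρ) (hsub hhalf)] at hannulus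
    linear_combination hannulus
  have hleft : Tendsto (fun ρ => (C * ∫ x in (0 : ℝ)..ρ, h x) - Complex.I * circleMoment r f ρ)
      (𝓝[>] 0) (𝓝 0) := by
    have hP := ((hprim 0 (left_mem_Icc.2 zero_le_one)).mono_of_mem_nhdsWithin
      (Icc_mem_nhdsGT zero_lt_one)).tendsto
    have hA := (tendsto_circleMoment_zero (hf.continuousOn.continuousAt
      (Metric.ball_mem_nhds 0 one_pos)) hr).const_mul Complex.I
    simpa only [intervalIntegral.integral_same, mul_zero, sub_zero] using hP.sub hA
  have hright := ((hprim 1 (right_mem_Icc.2 zero_le_one)).mono_of_mem_nhdsWithin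
    (Icc_mem_nhdsLT zero_lt_one)).tendsto.sub
      ((tendsto_circleMoment_one hf.continuousOn hr.le hbound hint hlim).const_mul Complex.I)
  have hleft' := hleft.congr' (eventually_of_mem (Ioo_mem_nhdsGT zero_lt_one) hconst)
  have hright' := hright.congr' (eventually_of_mem (Ioo_mem_nhdsLT zero_lt_one) hconst)
  exact sub_eq_zero.1 ((tendsto_nhds_unique tendsto_const_nhds hright').symm.trans
    (tendsto_nhds_unique tendsto_const_nhds hleft'))

end Keyhole

lemma div_four_mem_Ioo {θ : ℝ} (hθ : θ ∈ Ioo 0 (2 * π)) : θ / 4 ∈ Ioo 0 (π / 2) :=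
  ⟨by linarith [hθ.1], by linarith [hθ.2]⟩

lemma intervalIntegrable_comp_div_four {f : ℝ → ℝ} (hf : IntervalIntegrable f volume 0 (π / 2)) :
    IntervalIntegrable (fun θ => f (θ / 4)) volume 0 (2 * π) := by
  have h := hf.comp_mul_left (c := 1 / 4)
  rw [zero_div, show π / 2 / (1 / 4) = 2 * π by ring] at h
  simpa only [one_div_mul_eq_div] using h

lemma keyhole_eulerKernel {r : ℝ} (hr : 0 < r) :
    (circleMap 0 1 (r * (2 * π)) - 1) * eulerIntegral r =
      Complex.I * ∫ θ in (0 : ℝ)..2 * π, circleMap 0 1 (r * θ) * eulerBoundary (θ / 4) := by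
  have hIoo := ae_mem_Ioo_of_mem_uIoc Real.two_pi_pos.le
  have hfour (ρ θ : ℝ) : circleMap 0 ρ θ = circleMap 0 ρ (4 * (θ / 4)) := by
    rw [mul_div_cancel₀ θ four_ne_zero]
  refine keyhole_disc differentiableOn_eulerKernel hr (intervalIntegrable_rpow_mul_eulerKernel hr)
    (bound := fun θ => 2 / π * (ellWeight (θ / 4) + ellWeight (π / 2 - θ / 4)))
    (fun ρ hρ => ?_) ?_ ?_
  · filter_upwards [hIoo] with θ hθ hmem
    rw [hfour]
    exact norm_eulerKernel_circleMap_le (div_four_mem_Ioo (hθ hmem)) hρ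
  · exact intervalIntegrable_comp_div_four ((intervalIntegrable_ellWeight.add
      (intervalIntegrable_comp_pi_div_two_sub intervalIntegrable_ellWeight)).const_mul (2 / π))
  · filter_upwards [hIoo] with θ hθ hmem
    simp_rw [hfour _ θ]
    exact tendsto_eulerKernel_circleMap (div_four_mem_Ioo (hθ hmem))

lemma circleMap_reflect_add (ρ μ β α : ℝ) :
    circleMap 0 ρ (μ * (π / 2 - α) + β) + Complex.I * circleMap 0 ρ (μ * α + β) =
      circleMap 0 (2 * ρ) (μ * (π / 4) + π / 4 + β) *
        (Real.cos (μ * (α - π / 4) + π / 4) : ℂ) := by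
  have hI : Complex.I = circleMap 0 1 (π / 2) := by
    simp [circleMap_zero, Complex.exp_pi_div_two_mul_I]
  have hcos (x : ℝ) : (Real.cos x : ℂ) = (circleMap 0 1 x + circleMap 0 1 (-x)) / 2 := by
    simp [circleMap_zero, Complex.cos]
  have htwo (x : ℝ) : circleMap 0 (2 * ρ) x = 2 * circleMap 0 ρ x := by
    simp [circleMap_zero, mul_assoc]
  rw [hI, circleMap_zero_mul, htwo, hcos, mul_assoc, mul_div_assoc', mul_div_cancel₀ _ two_ne_zero,
    mul_add, circleMap_zero_mul, circleMap_zero_mul, add_comm]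
  ring_nf

lemma integral_circleMap_mul_reflect {w : ℝ → ℝ} (hw : IntervalIntegrable w volume 0 (π / 2))
    (ρ μ β : ℝ) :
    ∫ α in (0 : ℝ)..π / 2,
        circleMap 0 ρ (μ * α + β) * (w (π / 2 - α) + Complex.I * w α) =
      circleMap 0 (2 * ρ) (μ * (π / 4) + π / 4 + β) *
        (∫ α in (0 : ℝ)..π / 2, Real.cos (μ * (α - π / 4) + π / 4) * w α : ℝ) := by
  have hint : IntervalIntegrable (fun α => circleMap 0 ρ (μ * (π / 2 - α) + β) * w α)
      volume 0 (π / 2) := (intervalIntegrable_coe hw).continuousOn_mul (by fun_prop)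
  have hint' : IntervalIntegrable (fun α => Complex.I * circleMap 0 ρ (μ * α + β) * w α)
      volume 0 (π / 2) := (intervalIntegrable_coe hw).continuousOn_mul (by fun_prop)
  calc ∫ α in (0 : ℝ)..π / 2, circleMap 0 ρ (μ * α + β) * (w (π / 2 - α) + Complex.I * w α)
      = ∫ α in (0 : ℝ)..π / 2,
          (circleMap 0 ρ (μ * (π / 2 - (π / 2 - α)) + β) * (w (π / 2 - α) : ℂ) +
            Complex.I * circleMap 0 ρ (μ * α + β) * w α) := by
        congr 1 with α
        rw [sub_sub_cancel]
        ring
    _ = ∫ α in (0 : ℝ)..π / 2, (circleMap 0 ρ (μ * (π / 2 - α) + β) * (w α : ℂ) +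
          Complex.I * circleMap 0 ρ (μ * α + β) * w α) := by
        rw [intervalIntegral.integral_add (intervalIntegrable_comp_pi_div_two_sub hint) hint',
          intervalIntegral.integral_add hint hint',
          integral_comp_pi_div_two_sub
            (fun α => circleMap 0 ρ (μ * (π / 2 - α) + β) * (w α : ℂ))]
    _ = _ := by
        rw [← intervalIntegral.integral_ofReal, ← intervalIntegral.integral_const_mul]
        congr 1 with α
        rw [← add_mul, circleMap_reflect_add]
        push_cast
        ring

lemma circleMap_mul_eulerBoundary (r α : ℝ) :
    circleMap 0 1 (r * (4 * α)) * eulerBoundary α =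
      circleMap 0 (√2 * π)⁻¹ ((4 * r - 2) * α + π / 4) *
        (ellWeight (π / 2 - α) + Complex.I * ellWeight α) := by
  rw [eulerBoundary, ← mul_assoc, circleMap_zero_mul, one_mul]
  ring_nf

lemma integral_circleMap_mul_eulerBoundary (r : ℝ) :
    ∫ θ in (0 : ℝ)..2 * π, circleMap 0 1 (r * θ) * eulerBoundary (θ / 4) =
      circleMap 0 (4 * √2 / π) (π * r) * (∫ α in (0 : ℝ)..π / 2,
        Real.cos ((4 * r - 2) * (α - π / 4) + π / 4) * ellWeight α : ℝ) := by
  have hscale := intervalIntegral.smul_integral_comp_mul_left (a := 0) (b := π / 2)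
    (fun θ : ℝ => circleMap 0 1 (r * θ) * eulerBoundary (θ / 4)) 4
  rw [mul_zero, show 4 * (π / 2) = 2 * π by ring] at hscale
  simp only [mul_div_cancel_left₀ _ (four_ne_zero (α := ℝ)), circleMap_mul_eulerBoundary] at hscale
  rw [← hscale, integral_circleMap_mul_reflect intervalIntegrable_ellWeight,
    show (4 * r - 2) * (π / 4) + π / 4 + π / 4 = π * r by ring, Complex.real_smul, ← mul_assoc]
  congr 1
  rw [circleMap_zero, circleMap_zero, ← mul_assoc, ← Complex.ofReal_mul]
  congr 2
  rw [mul_inv, ← mul_assoc 2, ← div_eq_mul_inv 2, Real.div_sqrt, ← div_eq_mul_inv, mul_div_assoc]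

lemma sin_mul_eulerIntegral {r : ℝ} (hr : 0 < r) :
    Real.sin (π * r) * eulerIntegral r = (2 * √2 / π * ∫ α in (0 : ℝ)..π / 2,
      Real.cos ((4 * r - 2) * (α - π / 4) + π / 4) * ellWeight α : ℝ) := by
  have h := keyhole_eulerKernel hr
  have hphase : Complex.exp ((π * r - π / 2 : ℝ) * Complex.I) =
      -Complex.I * Complex.exp ((π * r : ℝ) * Complex.I) := by
    rw [← Complex.exp_neg_pi_div_two_mul_I, ← Complex.exp_add]
    push_cast
    ring_nf
  rw [integral_circleMap_mul_eulerBoundary, show r * (2 * π) = 2 * (π * r) by ring, ← neg_sub,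
    one_sub_circleMap_one, circleMap_zero, circleMap_zero, hphase] at h
  refine mul_left_cancel₀ (mul_ne_zero (mul_ne_zero two_ne_zero Complex.I_ne_zero)
    (Complex.exp_ne_zero ((π * r : ℝ) * Complex.I))) ?_
  push_cast at h ⊢
  linear_combination h

/-! ### Moments of the elliptic weight -/

/-- The moment `∫ cos ^ j (α/2) * sin ^ k (α/2)` of `ellWeight` over `[0, π/2]`. -/
noncomputable def trigMoment (j k : ℕ) : ℝ :=
  ∫ α in (0 : ℝ)..π / 2, Real.cos (α / 2) ^ j * Real.sin (α / 2) ^ k * ellWeight α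

lemma intervalIntegrable_trigMoment (j k : ℕ) :
    IntervalIntegrable (fun α => Real.cos (α / 2) ^ j * Real.sin (α / 2) ^ k * ellWeight α)
      volume 0 (π / 2) :=
  intervalIntegrable_ellWeight.continuousOn_mul (by fun_prop)

lemma trigMoment_add_two (j k : ℕ) :
    trigMoment (j + 2) k + trigMoment j (k + 2) = trigMoment j k := by
  rw [trigMoment, trigMoment, trigMoment, ← intervalIntegral.integral_add
    (intervalIntegrable_trigMoment _ _) (intervalIntegrable_trigMoment _ _)]
  congr 1 with α
  linear_combination Real.cos (α / 2) ^ j * Real.sin (α / 2) ^ k * ellWeight α *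
    Real.sin_sq_add_cos_sq (α / 2)

lemma integral_cos_half_add_mul_ellWeight (β : ℝ) :
    ∫ α in (0 : ℝ)..π / 2, Real.cos (α / 2 + β) * ellWeight α =
      Real.cos β * trigMoment 1 0 - Real.sin β * trigMoment 0 1 := by
  rw [trigMoment, trigMoment, ← intervalIntegral.integral_const_mul,
    ← intervalIntegral.integral_const_mul, ← intervalIntegral.integral_sub
    ((intervalIntegrable_trigMoment _ _).const_mul _)
    ((intervalIntegrable_trigMoment _ _).const_mul _)]
  congr 1 with α
  rw [Real.cos_add]
  ring

lemma eulerIntegral_odd_div_eight {j k : ℕ} (h : j + k = 3) :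
    eulerIntegral ((2 * k + 1) / 8) = (8 / π * trigMoment j k : ℝ) := by
  rw [eulerIntegral_eq_integral_tan_half, trigMoment]
  congr 2
  refine intervalIntegral.integral_congr_Ioo_of_le Real.pi_div_two_pos.le fun α hα => ?_
  have hc := (cos_half_pos (Ioo_subset_Icc_self hα)).ne'
  rw [show (4 * ((2 * k + 1) / 8) - 1 / 2 : ℝ) = k by ring, Real.rpow_natCast, ← h,
    Real.tan_eq_sin_div_cos, div_pow, pow_add]
  field_simp

lemma sin_mul_trigMoment {j k : ℕ} (h : j + k = 3) :
    2 * √2 * Real.sin (π * ((2 * k + 1) / 8)) * trigMoment j k = ∫ α in (0 : ℝ)..π / 2,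
      Real.cos ((4 * ((2 * k + 1) / 8) - 2) * (α - π / 4) + π / 4) * ellWeight α := by
  have hsin := sin_mul_eulerIntegral (r := (2 * k + 1) / 8) (by positivity)
  rw [eulerIntegral_odd_div_eight h] at hsin
  set J := ∫ α in (0 : ℝ)..π / 2,
    Real.cos ((4 * ((2 * k + 1) / 8) - 2) * (α - π / 4) + π / 4) * ellWeight α
  have hsin' : Real.sin (π * ((2 * k + 1) / 8)) * (8 / π * trigMoment j k) = 2 * √2 / π * J := by
    exact_mod_cast hsin
  have hs := Real.mul_self_sqrt (zero_le_two (α := ℝ))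
  refine mul_left_cancel₀ (inv_ne_zero Real.pi_ne_zero) ?_
  linear_combination √2 / 4 * hsin' + π⁻¹ * J / 2 * hs

lemma cos_pi_div_eight_ne_zero : Real.cos (π / 8) ≠ 0 :=
  (Real.cos_pos_of_mem_Ioo ⟨by linarith [Real.pi_pos], by linarith [Real.pi_pos]⟩).ne'

lemma sin_pi_div_eight_eq : Real.sin (π / 8) = (√2 - 1) * Real.cos (π / 8) := by
  have hsin := Real.sin_two_mul (π / 8)
  have hcos2 := Real.cos_sq (π / 8)
  rw [show 2 * (π / 8) = π / 4 by ring] at hsin hcos2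
  rw [Real.sin_pi_div_four] at hsin
  rw [Real.cos_pi_div_four] at hcos2
  have hs : √2 ^ 2 = 2 := Real.sq_sqrt zero_le_two
  refine mul_right_cancel₀ cos_pi_div_eight_ne_zero ?_
  linear_combination -hsin / 2 - (√2 - 1) * hcos2 - hs / 4

lemma two_mul_sqrt_two_mul_trigMoment_two_one :
    2 * √2 * trigMoment 2 1 = trigMoment 0 1 + (√2 - 1) * trigMoment 1 0 := by
  have h := sin_mul_trigMoment (j := 2) (k := 1) rfl
  have hcos (α : ℝ) : Real.cos ((4 * ((2 * (1 : ℕ) + 1) / 8) - 2) * (α - π / 4) + π / 4) =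
      Real.cos (α / 2 + (π / 8 - π / 2)) := by
    rw [← Real.cos_neg]
    push_cast
    ring_nf
  simp_rw [hcos] at h
  rw [show π * ((2 * (1 : ℕ) + 1) / 8) = π / 2 - π / 8 by push_cast; ring,
    Real.sin_pi_div_two_sub, integral_cos_half_add_mul_ellWeight, Real.cos_sub_pi_div_two,
    Real.sin_sub_pi_div_two, sin_pi_div_eight_eq] at h
  exact mul_left_cancel₀ cos_pi_div_eight_ne_zero (by linear_combination h)

lemma two_mul_sqrt_two_mul_trigMoment_one_two :
    2 * √2 * trigMoment 1 2 = trigMoment 1 0 - (√2 - 1) * trigMoment 0 1 := by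
  have h := sin_mul_trigMoment (j := 1) (k := 2) rfl
  have hcos (α : ℝ) : Real.cos ((4 * ((2 * (2 : ℕ) + 1) / 8) - 2) * (α - π / 4) + π / 4) =
      Real.cos (α / 2 + π / 8) := by
    push_cast
    ring_nf
  simp_rw [hcos] at h
  rw [show π * ((2 * (2 : ℕ) + 1) / 8) = π / 8 + π / 2 by push_cast; ring,
    Real.sin_add_pi_div_two, integral_cos_half_add_mul_ellWeight, sin_pi_div_eight_eq] at h
  exact mul_left_cancel₀ cos_pi_div_eight_ne_zero (by linear_combination h)

lemma trigMoment_three_zero : trigMoment 3 0 = trigMoment 2 1 + √2 * trigMoment 1 2 := by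
  have hs := Real.mul_self_sqrt (zero_le_two (α := ℝ))
  linear_combination trigMoment_add_two 1 0 - √2 / 4 * two_mul_sqrt_two_mul_trigMoment_two_one -
    (2 + √2) / 4 * two_mul_sqrt_two_mul_trigMoment_one_two +
    (trigMoment 2 1 + trigMoment 1 2 + (trigMoment 0 1 - trigMoment 1 0) / 2) / 2 * hs

lemma sqrt_two_mul_trigMoment_two_one :
    √2 * trigMoment 2 1 = trigMoment 1 2 + trigMoment 0 3 := by
  have hs := Real.mul_self_sqrt (zero_le_two (α := ℝ))
  linear_combination -trigMoment_add_two 0 1 +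
    (2 + √2) / 4 * two_mul_sqrt_two_mul_trigMoment_two_one -
    √2 / 4 * two_mul_sqrt_two_mul_trigMoment_one_two +
    (trigMoment 1 2 - trigMoment 2 1 + (trigMoment 0 1 + trigMoment 1 0) / 2) / 2 * hs

lemma Fval_add_half {r s : ℚ} (hr : 0 < r) (hs : s = r + 1 / 2) :
    (Fval r s : ℂ) = (2 ^ (1 - 4 * r : ℝ) / (2 * r.den) : ℝ) * eulerIntegral r := by
  have hs' : (s : ℝ) = r + 1 / 2 := by rw [hs]; push_cast; rfl
  rw [← betaFn_mul_threeF2 (Rat.cast_pos.2 hr), Fval, hs', add_sub_cancel_left,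
    ← Complex.ofReal_mul, div_mul_eq_mul_div, mul_assoc]
  ring_nf

lemma den_odd_div_eight (k : ℕ) : ((2 * k + 1) / 8 : ℚ).den = 8 := by
  have h := Rat.den_div_eq_of_coprime (a := 2 * k + 1) (b := 8) (by norm_num)
    (Nat.Coprime.pow_right 3 (Nat.coprime_two_right.2 ⟨k, by omega⟩))
  push_cast at h
  exact_mod_cast h

lemma Fval_odd_div_eight {j k : ℕ} (h : j + k = 3) :
    Fval ((2 * k + 1) / 8) ((2 * k + 5) / 8) = √2 / (2 * π * 2 ^ k) * trigMoment j k := by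
  have hF := Fval_add_half (r := (2 * k + 1) / 8) (s := (2 * k + 5) / 8) (by positivity) (by ring)
  have hpow : (2 : ℝ) ^ (1 - 4 * ((2 * k + 1) / 8) : ℝ) = √2 / 2 ^ k := by
    rw [Real.sqrt_eq_rpow, ← Real.rpow_natCast, ← Real.rpow_sub two_pos]
    ring_nf
  rw [den_odd_div_eight, show (((2 * k + 1) / 8 : ℚ) : ℝ) = (2 * k + 1) / 8 by push_cast; rfl, hpow,
    eulerIntegral_odd_div_eight h, ← Complex.ofReal_mul, Complex.ofReal_inj] at hF
  rw [hF]
  push_cast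
  ring

end ThreeTerm

open Complex in
/-- F(1/8,5/8) − 8i·F(7/8,11/8) = (1 − i√2)·(2·F(3/8,7/8) + 4i·F(5/8,9/8)). -/
theorem three_term_class6 :
    (Fval (1/8) (5/8) : ℂ) - 8 * I * (Fval (7/8) (11/8) : ℂ) =
      (1 - I * (Real.sqrt 2 : ℂ)) *
        (2 * (Fval (3/8) (7/8) : ℂ) + 4 * I * (Fval (5/8) (9/8) : ℂ)) := by
  have hF₀ := ThreeTerm.Fval_odd_div_eight (j := 3) (k := 0) rfl
  have hF₁ := ThreeTerm.Fval_odd_div_eight (j := 2) (k := 1) rfl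
  have hF₂ := ThreeTerm.Fval_odd_div_eight (j := 1) (k := 2) rfl
  have hF₃ := ThreeTerm.Fval_odd_div_eight (j := 0) (k := 3) rfl
  have hre := congrArg ((↑) : ℝ → ℂ) ThreeTerm.trigMoment_three_zero
  have him := congrArg ((↑) : ℝ → ℂ) ThreeTerm.sqrt_two_mul_trigMoment_two_one
  norm_num at hF₀ hF₁ hF₂ hF₃
  rw [hF₀, hF₁, hF₂, hF₃]
  push_cast at hre him ⊢
  linear_combination (√2 : ℂ) / (2 * Real.pi) * (hre + I * him) +
    (√2 : ℂ) ^ 2 / (2 * Real.pi) * (ThreeTerm.trigMoment 1 2 : ℂ) * I_sq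
end
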